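/- arXiv:1902.04480 — 2 statements merged into one kernel-verified Lean document; each statement's English description precedes it below -/
import Mathlib

section
/- Let m ≥ 2 be an integer, D : [0,1] → ℝ continuous, and E ∈ ℝ^{1×n} a row vector. For all positive constants c₁, …, c_{m−1} there exists c_m^* > 0 such that for every c_m ≥ c_m^* there exist constants Υ > 0 and λ > 0, depending only on q, M, B, P, Q, D, E, c₁, …, c_m, with the following property: whenever (w, X) is a classical solution of the target PDE–ODE subsystem and y₁, …, y_m : [0,∞) → ℝ are differentiable functions satisfying y₁(t) = w(1,t), y₂(t) = w_t(1,t) + c₁·y₁(t), ẏ_i(t) = y_{i+1}(t) − y_{i−1}(t) − c_i·y_i(t) for 2 ≤ i ≤ m−1, and ẏ_m(t) = −y_{m−1}(t) − c_m·y_m(t) + E·X(t) − ∫₀¹ D(σ)·w(σ,t) dσ, then the quantity Ω(t) = ‖w(·,t)‖² + ‖w_x(·,t)‖² + |X(t)|² + Σ_{i=1}^{m} y_i(t)² satisfies Ω(t) ≤ Υ·Ω(0)·e^{−λt} for all t ≥ 0. -/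
open scoped Matrix
open Set

/-- `Ω(t) = ‖w(·,t)‖² + ‖w_x(·,t)‖² + |X(t)|² + Σ_{i=1}^m y_i(t)²`. -/
noncomputable def Omega10 (n m : ℕ) (w : ℝ → ℝ → ℝ) (X : ℝ → Fin n → ℝ)
    (y : ℕ → ℝ → ℝ) (t : ℝ) : ℝ :=
  (∫ x in (0:ℝ)..1, (w x t) ^ 2)
  + (∫ x in (0:ℝ)..1, (deriv (fun s => w s t) x) ^ 2)
  + (∑ i, (X t i) ^ 2)
  + ∑ i ∈ Finset.Icc 1 m, (y i t) ^ 2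

/-!
The Lyapunov function is `V = XᵀPX + a(‖w‖² + ‖w_x‖²) + b Σ y_i²`. Put `N = ‖w_x‖² + ‖w_xx‖²`.
Integrating by parts in the heat equation, the energy `‖w‖² + ‖w_x‖²` decays at rate `2qN` up to
the boundary term `2 w_x(1) (q w(1) + w_t(1))`, whose second factor is the linear combination
`(q - c₁) y₁ + y₂` of the chain variables. The Sobolev trace inequality bounds `w_x(0)²` and
`w_x(1)²` by `2N`, and Poincaré's inequality bounds `‖w‖²` by `N`. In `Σ y_i ẏ_i` the couplings
`y_i y_{i+1}` cancel, leaving the damping and the product of `y_m` with the input `E X - ∫ D w`.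

The constants are chosen in the order `a` (to dominate the `w_x(0)²` entering through the ODE), `b`
(to dominate the boundary term at `x = 1`), and `c_m` (to dominate the input). Then
`V' ≤ -ν Ω`, and Grönwall's inequality concludes as `V` and `Ω` are comparable.
-/

open MeasureTheory Function

section Integral

theorem sq_integral_mul_le {α : Type*} {_ : MeasurableSpace α} {μ : Measure α} {f g : α → ℝ}
    (hf : MemLp f 2 μ) (hg : MemLp g 2 μ) :
    (∫ x, f x * g x ∂μ) ^ 2 ≤ (∫ x, f x ^ 2 ∂μ) * ∫ x, g x ^ 2 ∂μ := by
  have hff (s : ℝ) : Integrable (fun x => s * s * f x ^ 2) μ := hf.integrable_sq.const_mul _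
  have hfg (s : ℝ) : Integrable (fun x => 2 * s * (f x * g x)) μ :=
    (hf.integrable_mul hg).const_mul _
  have quadratic_nonneg (s : ℝ) :
      0 ≤ (∫ x, f x ^ 2 ∂μ) * (s * s) + (2 * ∫ x, f x * g x ∂μ) * s + ∫ x, g x ^ 2 ∂μ := by
    calc
      0 ≤ ∫ x, (s * f x + g x) ^ 2 ∂μ := integral_nonneg fun x => sq_nonneg _
      _ = ∫ x, (s * s * f x ^ 2 + 2 * s * (f x * g x)) + g x ^ 2 ∂μ := by
        congr with x; ring
      _ = _ := by
        rw [integral_add ((hff s).fun_add (hfg s)) hg.integrable_sq, integral_add (hff s) (hfg s),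
          integral_const_mul, integral_const_mul]
        ring
  have discrim_nonpos := discrim_le_zero quadratic_nonneg
  rw [discrim] at discrim_nonpos
  linarith

theorem memLp_restrict_of_isCompact {α E : Type*} [TopologicalSpace α] [MeasurableSpace α]
    [OpensMeasurableSpace α] [TopologicalSpace.PseudoMetrizableSpace α] [NormedAddCommGroup E]
    {μ : Measure α} [IsFiniteMeasureOnCompacts μ] {p : ENNReal} {f : α → E} {K : Set α}
    (hK : IsCompact K) (hKm : MeasurableSet K) (hf : ContinuousOn f K) :
    MemLp f p (μ.restrict K) := by
  have : IsFiniteMeasure (μ.restrict K) := isFiniteMeasure_restrict.2 hK.measure_lt_top.ne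
  obtain ⟨C, hC⟩ := hK.exists_bound_of_continuousOn hf
  exact .of_bound (hf.aestronglyMeasurable_of_isCompact hK hKm) C
    ((ae_restrict_iff' hKm).2 (.of_forall hC))

variable {a b : ℝ} {f g f' : ℝ → ℝ}

theorem sq_intervalIntegral_mul_le (hab : a ≤ b) (hf : MemLp f 2 (volume.restrict (Icc a b)))
    (hg : MemLp g 2 (volume.restrict (Icc a b))) :
    (∫ x in a..b, f x * g x) ^ 2 ≤ (∫ x in a..b, f x ^ 2) * ∫ x in a..b, g x ^ 2 := by
  simpa only [intervalIntegral.integral_of_le hab, ← integral_Icc_eq_integral_Ioc]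
    using sq_integral_mul_le hf hg

theorem intervalIntegral_sq_nonneg (hab : a ≤ b) (f : ℝ → ℝ) : 0 ≤ ∫ x in a..b, f x ^ 2 :=
  intervalIntegral.integral_nonneg hab fun _ _ => sq_nonneg _

theorem sq_intervalIntegral_le (hab : a ≤ b) (hf : ContinuousOn f (Icc a b)) :
    (∫ x in a..b, f x) ^ 2 ≤ (b - a) * ∫ x in a..b, f x ^ 2 := by
  simpa using sq_intervalIntegral_mul_le hab
    (memLp_restrict_of_isCompact (f := fun _ => 1) isCompact_Icc measurableSet_Icc
      continuousOn_const)
    (memLp_restrict_of_isCompact isCompact_Icc measurableSet_Icc hf)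

theorem sq_sub_le_mul_integral_sq_deriv (hf : ∀ x ∈ Icc a b, HasDerivAt f (f' x) x)
    (hf' : ContinuousOn f' (Icc a b)) {x z : ℝ} (hx : x ∈ Icc a b) (hz : z ∈ Icc a b) :
    (f z - f x) ^ 2 ≤ (b - a) * ∫ s in a..b, f' s ^ 2 := by
  wlog hxz : x ≤ z generalizing x z
  · rw [← neg_sq, neg_sub]
    exact this hz hx (le_of_not_ge hxz)
  have hsub : Icc x z ⊆ Icc a b := Icc_subset_Icc hx.1 hz.2
  have hab : a ≤ b := hx.1.trans hx.2
  calc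
    (f z - f x) ^ 2 = (∫ s in x..z, f' s) ^ 2 := by
      rw [intervalIntegral.integral_eq_sub_of_hasDerivAt
        (fun s hs => hf s (hsub (uIcc_of_le hxz ▸ hs)))
        ((hf'.mono hsub).intervalIntegrable_of_Icc hxz)]
    _ ≤ (z - x) * ∫ s in x..z, f' s ^ 2 := sq_intervalIntegral_le hxz (hf'.mono hsub)
    _ ≤ (b - a) * ∫ s in a..b, f' s ^ 2 := by
      have hmono : ∫ s in x..z, f' s ^ 2 ≤ ∫ s in a..b, f' s ^ 2 :=
        intervalIntegral.integral_mono_interval hx.1 hxz hz.2 (.of_forall fun s => sq_nonneg (f' s))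
          ((hf'.pow 2).intervalIntegrable_of_Icc hab)
      gcongr
      exacts [intervalIntegral_sq_nonneg hxz f', hz.2, hx.1]

theorem integral_sq_le_of_eq_zero_left (hab : a ≤ b) (hf : ∀ x ∈ Icc a b, HasDerivAt f (f' x) x)
    (hf' : ContinuousOn f' (Icc a b)) (ha : f a = 0) :
    ∫ x in a..b, f x ^ 2 ≤ (b - a) ^ 2 * ∫ x in a..b, f' x ^ 2 := by
  have hfc : ContinuousOn f (Icc a b) := fun x hx => (hf x hx).continuousAt.continuousWithinAt
  calc
    ∫ x in a..b, f x ^ 2 ≤ ∫ _ in a..b, (b - a) * ∫ s in a..b, f' s ^ 2 :=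
      intervalIntegral.integral_mono_on hab ((hfc.pow 2).intervalIntegrable_of_Icc hab)
        intervalIntegrable_const fun x hx => by
          simpa [ha] using sq_sub_le_mul_integral_sq_deriv hf hf' (left_mem_Icc.2 hab) hx
    _ = (b - a) ^ 2 * ∫ x in a..b, f' x ^ 2 := by
      rw [intervalIntegral.integral_const, smul_eq_mul]; ring

theorem mul_sq_le_integral_sq_add_integral_sq_deriv (hf : ∀ x ∈ Icc a b, HasDerivAt f (f' x) x)
    (hf' : ContinuousOn f' (Icc a b)) {z : ℝ} (hz : z ∈ Icc a b) :
    (b - a) * f z ^ 2 ≤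
      2 * (∫ x in a..b, f x ^ 2) + 2 * ((b - a) ^ 2 * ∫ x in a..b, f' x ^ 2) := by
  have hab : a ≤ b := hz.1.trans hz.2
  have hfc : ContinuousOn f (Icc a b) := fun x hx => (hf x hx).continuousAt.continuousWithinAt
  have hf2 : IntervalIntegrable (fun x => 2 * f x ^ 2) volume a b :=
    ((hfc.pow 2).intervalIntegrable_of_Icc hab).const_mul 2
  calc
    (b - a) * f z ^ 2 = ∫ _ in a..b, f z ^ 2 := by
      rw [intervalIntegral.integral_const, smul_eq_mul]
    _ ≤ ∫ x in a..b, 2 * f x ^ 2 + 2 * ((b - a) * ∫ s in a..b, f' s ^ 2) :=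
      intervalIntegral.integral_mono_on hab intervalIntegrable_const
        (hf2.add intervalIntegrable_const) fun x hx => by
          linarith [sq_sub_le_mul_integral_sq_deriv hf hf' hx hz, sq_nonneg (f z - 2 * f x)]
    _ = _ := by
      rw [intervalIntegral.integral_add hf2 intervalIntegrable_const,
        intervalIntegral.integral_const_mul, intervalIntegral.integral_const, smul_eq_mul]
      ring

end Integral

section PartialDerivatives

variable {E : Type*} [NormedAddCommGroup E] [NormedSpace ℝ E]

/-- The partial derivative `w_x` of a function `w x t` of two real variables. -/
noncomputable def partialX (w : ℝ → ℝ → E) (x t : ℝ) : E := deriv (fun s => w s t) x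

/-- The partial derivative `w_t` of a function `w x t` of two real variables. -/
noncomputable def partialT (w : ℝ → ℝ → E) (x t : ℝ) : E := deriv (fun s => w x s) t

variable {w : ℝ → ℝ → E}

theorem hasDerivAt_fst_of_differentiableAt {x t : ℝ} (hw : DifferentiableAt ℝ (uncurry w) (x, t)) :
    HasDerivAt (fun s => w s t) (fderiv ℝ (uncurry w) (x, t) (1, 0)) x :=
  hw.hasFDerivAt.comp_hasDerivAt (f := fun s => (s, t)) x
    ((hasDerivAt_id' x).prodMk (hasDerivAt_const x t))

theorem hasDerivAt_snd_of_differentiableAt {x t : ℝ} (hw : DifferentiableAt ℝ (uncurry w) (x, t)) :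
    HasDerivAt (fun s => w x s) (fderiv ℝ (uncurry w) (x, t) (0, 1)) t :=
  hw.hasFDerivAt.comp_hasDerivAt (f := fun s => (x, s)) t
    ((hasDerivAt_const t x).prodMk (hasDerivAt_id' t))

theorem hasDerivAt_partialX (hw : Differentiable ℝ (uncurry w)) (x t : ℝ) :
    HasDerivAt (fun s => w s t) (partialX w x t) x :=
  (hasDerivAt_fst_of_differentiableAt (hw (x, t))).differentiableAt.hasDerivAt

theorem hasDerivAt_partialT (hw : Differentiable ℝ (uncurry w)) (x t : ℝ) :
    HasDerivAt (fun s => w x s) (partialT w x t) t :=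
  (hasDerivAt_snd_of_differentiableAt (hw (x, t))).differentiableAt.hasDerivAt

theorem uncurry_partialX (hw : Differentiable ℝ (uncurry w)) :
    uncurry (partialX w) = fun p => fderiv ℝ (uncurry w) p (1, 0) :=
  funext fun p => (hasDerivAt_fst_of_differentiableAt (hw p)).deriv

theorem uncurry_partialT (hw : Differentiable ℝ (uncurry w)) :
    uncurry (partialT w) = fun p => fderiv ℝ (uncurry w) p (0, 1) :=
  funext fun p => (hasDerivAt_snd_of_differentiableAt (hw p)).deriv

theorem contDiff_partialX {k : WithTop ℕ∞} (hw : ContDiff ℝ (k + 1) (uncurry w)) :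
    ContDiff ℝ k (uncurry (partialX w)) := by
  rw [uncurry_partialX (hw.differentiable (by simp))]
  exact (hw.fderiv_right le_rfl).clm_apply contDiff_const

theorem contDiff_partialT {k : WithTop ℕ∞} (hw : ContDiff ℝ (k + 1) (uncurry w)) :
    ContDiff ℝ k (uncurry (partialT w)) := by
  rw [uncurry_partialT (hw.differentiable (by simp))]
  exact (hw.fderiv_right le_rfl).clm_apply contDiff_const

theorem partialT_partialX (hw : ContDiff ℝ 2 (uncurry w)) (x t : ℝ) :
    partialT (partialX w) x t = partialX (partialT w) x t := by
  have hw1 : Differentiable ℝ (uncurry w) := hw.differentiable two_ne_zero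
  have hfderiv : Differentiable ℝ (fderiv ℝ (uncurry w)) :=
    (hw.fderiv_right (m := 1) one_add_one_eq_two.le).differentiable one_ne_zero
  have fderiv_apply (u v : ℝ × ℝ) : fderiv ℝ (fun p => fderiv ℝ (uncurry w) p u) (x, t) v =
      fderiv ℝ (fderiv ℝ (uncurry w)) (x, t) v u := by
    rw [fderiv_clm_apply (hfderiv _) (differentiableAt_const u)]
    simp
  have hXT := hasDerivAt_snd_of_differentiableAt (w := partialX w) (x := x) (t := t)
    (by rw [uncurry_partialX hw1]; fun_prop)
  have hTX := hasDerivAt_fst_of_differentiableAt (w := partialT w) (x := x) (t := t)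
    (by rw [uncurry_partialT hw1]; fun_prop)
  rw [partialT, partialX, hXT.deriv, hTX.deriv, uncurry_partialX hw1, uncurry_partialT hw1,
    fderiv_apply, fderiv_apply]
  exact hw.contDiffAt.isSymmSndFDerivAt (by simp) _ _

theorem hasDerivAt_intervalIntegral_of_contDiff (hw : ContDiff ℝ 1 (uncurry w)) (a b t : ℝ) :
    HasDerivAt (fun s => ∫ x in a..b, w x s) (∫ x in a..b, partialT w x t) t := by
  have hwT : Continuous (uncurry (partialT w)) := (contDiff_partialT (k := 0) hw).continuous
  obtain ⟨C, hC⟩ := (isCompact_uIcc.prod (isCompact_closedBall t 1)).exists_bound_of_continuousOn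
    (s := uIcc a b ×ˢ Metric.closedBall t 1) hwT.continuousOn
  refine (intervalIntegral.hasDerivAt_integral_of_dominated_loc_of_deriv_le
    (F := fun s x => w x s) (F' := fun s x => partialT w x s) (bound := fun _ => C)
    (Metric.closedBall_mem_nhds t one_pos)
    (.of_forall fun s => (hw.continuous.uncurry_right s).aestronglyMeasurable)
    ((hw.continuous.uncurry_right t).intervalIntegrable _ _)
    (hwT.uncurry_right t).aestronglyMeasurable
    (.of_forall fun x hx s hs => hC (x, s) ⟨uIoc_subset_uIcc hx, hs⟩) intervalIntegrable_const
    (.of_forall fun x _ s _ => hasDerivAt_partialT (hw.differentiable one_ne_zero) x s)).2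

theorem hasDerivAt_intervalIntegral_sq {w : ℝ → ℝ → ℝ} (hw : ContDiff ℝ 1 (uncurry w))
    (a b t : ℝ) :
    HasDerivAt (fun s => ∫ x in a..b, w x s ^ 2) (2 * ∫ x in a..b, w x t * partialT w x t) t := by
  refine (hasDerivAt_intervalIntegral_of_contDiff (w := fun x s => w x s ^ 2)
    (hw.pow 2) a b t).congr_deriv ?_
  rw [← intervalIntegral.integral_const_mul]
  congr with x
  exact ((hasDerivAt_partialT (hw.differentiable one_ne_zero) x t).fun_pow 2).deriv.trans
    (by simp [mul_assoc])

theorem deriv_eq_of_eqOn_Ici {f g : ℝ → E} {a t : ℝ} (hf : DifferentiableAt ℝ f t)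
    (hg : DifferentiableAt ℝ g t) (hfg : EqOn f g (Ici a)) (ht : a ≤ t) :
    deriv f t = deriv g t :=
  (uniqueDiffOn_Ici a t ht).eq_deriv _ hf.hasDerivAt.hasDerivWithinAt
    (hg.hasDerivAt.hasDerivWithinAt.congr hfg (hfg ht))

end PartialDerivatives

section HeatEquation

variable {q a b t : ℝ} {w : ℝ → ℝ → ℝ}

theorem hasDerivAt_integral_sq_of_heat (hw : ContDiff ℝ 2 (uncurry w))
    (heat : ∀ x ∈ uIcc a b, partialT w x t = q * partialX (partialX w) x t) :
    HasDerivAt (fun s => ∫ x in a..b, w x s ^ 2)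
      (2 * q * (w b t * partialX w b t - w a t * partialX w a t
        - ∫ x in a..b, partialX w x t ^ 2)) t := by
  have hwX : ContDiff ℝ 1 (uncurry (partialX w)) := contDiff_partialX (k := 1) hw
  have hwXX : Continuous (uncurry (partialX (partialX w))) :=
    (contDiff_partialX (k := 0) hwX).continuous
  refine (hasDerivAt_intervalIntegral_sq (hw.of_le one_le_two) a b t).congr_deriv ?_
  calc
    2 * ∫ x in a..b, w x t * partialT w x t
      = 2 * q * ∫ x in a..b, w x t * partialX (partialX w) x t := by
        rw [mul_assoc, ← intervalIntegral.integral_const_mul q]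
        congr 1
        refine intervalIntegral.integral_congr fun x hx => ?_
        simp only [heat x hx]
        ring
    _ = _ := by
        rw [intervalIntegral.integral_mul_deriv_eq_deriv_mul
          (fun x _ => hasDerivAt_partialX (hw.differentiable two_ne_zero) x t)
          (fun x _ => hasDerivAt_partialX (hwX.differentiable one_ne_zero) x t)
          ((hwX.continuous.uncurry_right t).intervalIntegrable _ _)
          ((hwXX.uncurry_right t).intervalIntegrable _ _)]
        simp only [sq]

theorem hasDerivAt_integral_sq_partialX_of_heat (hw : ContDiff ℝ 2 (uncurry w))
    (heat : ∀ x ∈ uIcc a b, partialT w x t = q * partialX (partialX w) x t) :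
    HasDerivAt (fun s => ∫ x in a..b, partialX w x s ^ 2)
      (2 * (partialX w b t * partialT w b t - partialX w a t * partialT w a t
        - q * ∫ x in a..b, partialX (partialX w) x t ^ 2)) t := by
  have hwX : ContDiff ℝ 1 (uncurry (partialX w)) := contDiff_partialX (k := 1) hw
  have hwT : ContDiff ℝ 1 (uncurry (partialT w)) := contDiff_partialT (k := 1) hw
  have hwXX : Continuous (uncurry (partialX (partialX w))) :=
    (contDiff_partialX (k := 0) hwX).continuous
  have hwTX : Continuous (uncurry (partialX (partialT w))) :=
    (contDiff_partialX (k := 0) hwT).continuous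
  refine (hasDerivAt_intervalIntegral_sq hwX a b t).congr_deriv ?_
  simp only [partialT_partialX hw]
  rw [intervalIntegral.integral_mul_deriv_eq_deriv_mul
    (fun x _ => hasDerivAt_partialX (hwX.differentiable one_ne_zero) x t)
    (fun x _ => hasDerivAt_partialX (hwT.differentiable one_ne_zero) x t)
    ((hwXX.uncurry_right t).intervalIntegrable _ _)
    ((hwTX.uncurry_right t).intervalIntegrable _ _),
    ← intervalIntegral.integral_const_mul]
  congr 2
  refine intervalIntegral.integral_congr fun x hx => ?_
  simp only [heat x hx]
  ring

end HeatEquation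

section HeatEnergy

/-- The dissipation `‖w_x(·,t)‖² + ‖w_xx(·,t)‖²` of the energy `‖w‖² + ‖w_x‖²` along the heat
equation on the unit interval. -/
noncomputable def dissipation (w : ℝ → ℝ → ℝ) (t : ℝ) : ℝ :=
  (∫ x in (0 : ℝ)..1, partialX w x t ^ 2) + ∫ x in (0 : ℝ)..1, partialX (partialX w) x t ^ 2

variable {q t : ℝ} {w : ℝ → ℝ → ℝ}

theorem dissipation_nonneg (w : ℝ → ℝ → ℝ) (t : ℝ) : 0 ≤ dissipation w t :=
  add_nonneg (intervalIntegral_sq_nonneg zero_le_one _) (intervalIntegral_sq_nonneg zero_le_one _)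

theorem sq_partialX_le_dissipation (hw : ContDiff ℝ 2 (uncurry w)) {z : ℝ}
    (hz : z ∈ Icc (0 : ℝ) 1) : partialX w z t ^ 2 ≤ 2 * dissipation w t := by
  have hwX : ContDiff ℝ 1 (uncurry (partialX w)) := contDiff_partialX (k := 1) hw
  have hwXX : Continuous (uncurry (partialX (partialX w))) :=
    (contDiff_partialX (k := 0) hwX).continuous
  have trace := mul_sq_le_integral_sq_add_integral_sq_deriv
    (fun x _ => hasDerivAt_partialX (hwX.differentiable one_ne_zero) x t)
    (hwXX.uncurry_right t).continuousOn hz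
  rw [dissipation]
  linarith

theorem integral_sq_le_dissipation (hw : ContDiff ℝ 1 (uncurry w)) (hw₀ : w 0 t = 0) :
    ∫ x in (0 : ℝ)..1, w x t ^ 2 ≤ dissipation w t := by
  have hwX : Continuous (uncurry (partialX w)) := (contDiff_partialX (k := 0) hw).continuous
  have poincare := integral_sq_le_of_eq_zero_left zero_le_one
    (fun x _ => hasDerivAt_partialX (hw.differentiable one_ne_zero) x t)
    (hwX.uncurry_right t).continuousOn hw₀
  have hwXX := intervalIntegral_sq_nonneg zero_le_one fun x => partialX (partialX w) x t
  rw [dissipation]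
  linarith

theorem hasDerivAt_heatEnergy_of_dirichlet (hw : ContDiff ℝ 2 (uncurry w))
    (heat : ∀ x ∈ uIcc (0 : ℝ) 1, partialT w x t = q * partialX (partialX w) x t)
    (hw₀ : w 0 t = 0) (hwT₀ : partialT w 0 t = 0) :
    HasDerivAt (fun s => (∫ x in (0 : ℝ)..1, w x s ^ 2) + ∫ x in (0 : ℝ)..1, partialX w x s ^ 2)
      (2 * (partialX w 1 t * (q * w 1 t + partialT w 1 t)) - 2 * q * dissipation w t) t := by
  refine ((hasDerivAt_integral_sq_of_heat hw heat).fun_add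
    (hasDerivAt_integral_sq_partialX_of_heat hw heat)).congr_deriv ?_
  rw [hw₀, hwT₀, dissipation]
  ring

theorem two_mul_flux_mul_sub_dissipation_le (hq : 0 < q) (hw : ContDiff ℝ 2 (uncurry w)) (r : ℝ) :
    2 * (partialX w 1 t * r) - 2 * q * dissipation w t ≤
      -q * dissipation w t + 2 / q * r ^ 2 := by
  have young : 2 * partialX w 1 t * r ≤ q / 2 * partialX w 1 t ^ 2 + (q / 2)⁻¹ * r ^ 2 :=
    two_mul_le_add_mul_sq (half_pos hq)
  have trace : q / 2 * partialX w 1 t ^ 2 ≤ q / 2 * (2 * dissipation w t) := by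
    gcongr; exact sq_partialX_le_dissipation hw (right_mem_Icc.2 zero_le_one)
  rw [inv_div] at young
  linarith

end HeatEnergy

section QuadraticForms

variable {ι : Type*} [Fintype ι] {P Q M : Matrix ι ι ℝ}

theorem sum_sq_mulVec_le {κ : Type*} [Fintype κ] (A : Matrix κ ι ℝ) (x : ι → ℝ) :
    ∑ i, (A *ᵥ x) i ^ 2 ≤ (∑ i, ∑ j, A i j ^ 2) * ∑ j, x j ^ 2 := by
  rw [Finset.sum_mul]
  exact Finset.sum_le_sum fun i _ => Finset.sum_mul_sq_le_sq_mul_sq _ (A i) x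

open scoped MatrixOrder Matrix.Norms.L2Operator in
theorem exists_forall_quadForm_mem_Icc (hP : P.PosDef) :
    ∃ p₁ p₂ : ℝ, 0 < p₁ ∧ 0 < p₂ ∧ ∀ x : ι → ℝ,
      x ⬝ᵥ P *ᵥ x ∈ Icc (p₁ * ∑ i, x i ^ 2) (p₂ * ∑ i, x i ^ 2) := by
  classical
  obtain ⟨L, hL, rfl⟩ :=
    CStarAlgebra.isStrictlyPositive_iff_eq_star_mul_self.1 hP.isStrictlyPositive
  have quadForm_eq (x : ι → ℝ) : x ⬝ᵥ (star L * L) *ᵥ x = ∑ i, (L *ᵥ x) i ^ 2 := by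
    rw [← Matrix.mulVec_mulVec, Matrix.dotProduct_mulVec, Matrix.star_eq_conjTranspose,
      Matrix.conjTranspose_eq_transpose_of_trivial, Matrix.vecMul_transpose]
    simp only [dotProduct, sq]
  have inv_mulVec (x : ι → ℝ) : L⁻¹ *ᵥ (L *ᵥ x) = x := by
    rw [Matrix.mulVec_mulVec, Matrix.nonsing_inv_mul _ (L.isUnit_iff_isUnit_det.1 hL),
      Matrix.one_mulVec]
  refine ⟨(∑ i, ∑ j, L⁻¹ i j ^ 2 + 1)⁻¹, ∑ i, ∑ j, L i j ^ 2 + 1, by positivity, by positivity,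
    fun x => ⟨?_, ?_⟩⟩ <;> rw [quadForm_eq]
  · rw [inv_mul_le_iff₀ (by positivity)]
    have := sum_sq_mulVec_le L⁻¹ (L *ᵥ x)
    rw [inv_mulVec] at this
    exact this.trans (by gcongr; linarith)
  · exact (sum_sq_mulVec_le L x).trans (by gcongr; linarith)

theorem hasDerivAt_quadForm (hP : P.IsSymm) {X : ℝ → ι → ℝ} {X' : ι → ℝ} {t : ℝ}
    (hX : HasDerivAt X X' t) :
    HasDerivAt (fun s => X s ⬝ᵥ P *ᵥ X s) (2 * (X t ⬝ᵥ P *ᵥ X')) t := by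
  have hXi := hasDerivAt_pi.1 hX
  have hderiv : HasDerivAt (fun s => X s ⬝ᵥ P *ᵥ X s) (X' ⬝ᵥ P *ᵥ X t + X t ⬝ᵥ P *ᵥ X') t := by
    simp only [dotProduct, Matrix.mulVec, ← Finset.sum_add_distrib]
    exact .fun_sum fun i _ => (hXi i).fun_mul (.fun_sum fun j _ => (hXi j).const_mul _)
  refine hderiv.congr_deriv ?_
  rw [Matrix.dotProduct_mulVec X', ← Matrix.mulVec_transpose, hP.eq, dotProduct_comm, two_mul]

theorem two_mul_quadForm_eq_of_lyapunov (hP : P.IsSymm) (hLyap : P * M + Mᵀ * P = -Q)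
    (x : ι → ℝ) : 2 * (x ⬝ᵥ P *ᵥ (M *ᵥ x)) = -(x ⬝ᵥ Q *ᵥ x) := by
  have hsymm : x ⬝ᵥ (Mᵀ * P) *ᵥ x = x ⬝ᵥ P *ᵥ (M *ᵥ x) := by
    rw [← Matrix.mulVec_mulVec, Matrix.dotProduct_mulVec, Matrix.vecMul_transpose,
      Matrix.dotProduct_mulVec, ← Matrix.mulVec_transpose, hP.eq, dotProduct_comm]
  rw [← dotProduct_neg, ← Matrix.neg_mulVec, ← hLyap, Matrix.add_mulVec, dotProduct_add, hsymm,
    ← Matrix.mulVec_mulVec, two_mul]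

theorem exists_dissipation_of_lyapunov (hP : P.IsSymm) (hQ : Q.PosDef)
    (hLyap : P * M + Mᵀ * P = -Q) (B : ι → ℝ) :
    ∃ κ K : ℝ, 0 < κ ∧ 0 < K ∧ ∀ (x : ι → ℝ) (h : ℝ),
      2 * (x ⬝ᵥ P *ᵥ (M *ᵥ x + h • B)) ≤ -κ * ∑ i, x i ^ 2 + K * h ^ 2 := by
  obtain ⟨q₁, _, hq₁, _, hQx⟩ := exists_forall_quadForm_mem_Icc hQ
  set β := ∑ i, (P *ᵥ B) i ^ 2 + 1
  have β_pos : 0 < β := by positivity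
  refine ⟨q₁ / 2, 2 * β / q₁, by positivity, by positivity, fun x h => ?_⟩
  have hxPB : (x ⬝ᵥ P *ᵥ B) ^ 2 ≤ β * ∑ i, x i ^ 2 := by
    rw [dotProduct_comm]
    exact (Finset.sum_mul_sq_le_sq_mul_sq _ _ _).trans (by gcongr; linarith)
  have young : 2 * (x ⬝ᵥ P *ᵥ B) * h ≤ q₁ / 2 * ∑ i, x i ^ 2 + 2 * β / q₁ * h ^ 2 := calc
    _ ≤ q₁ / (2 * β) * (x ⬝ᵥ P *ᵥ B) ^ 2 + (q₁ / (2 * β))⁻¹ * h ^ 2 :=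
      two_mul_le_add_mul_sq (by positivity)
    _ ≤ q₁ / (2 * β) * (β * ∑ i, x i ^ 2) + (q₁ / (2 * β))⁻¹ * h ^ 2 := by gcongr
    _ = _ := by field_simp
  calc
    2 * (x ⬝ᵥ P *ᵥ (M *ᵥ x + h • B))
      = -(x ⬝ᵥ Q *ᵥ x) + 2 * (x ⬝ᵥ P *ᵥ B) * h := by
        rw [Matrix.mulVec_add, dotProduct_add, mul_add, two_mul_quadForm_eq_of_lyapunov hP hLyap,
          Matrix.mulVec_smul, dotProduct_smul, smul_eq_mul, mul_comm h, mul_assoc]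
    _ ≤ -(q₁ / 2) * ∑ i, x i ^ 2 + 2 * β / q₁ * h ^ 2 := by linarith [(hQx x).1]

end QuadraticForms

section BacksteppingChain

variable {a d c : ℕ → ℝ}

theorem sum_mul_eq_of_backstepping {k : ℕ} (hk : 1 ≤ k) (hd₁ : d 1 = a 2 - c 1 * a 1)
    (hd : ∀ i, 2 ≤ i → i ≤ k → d i = a (i + 1) - a (i - 1) - c i * a i) :
    ∑ i ∈ Finset.Icc 1 k, a i * d i = a k * a (k + 1) - ∑ i ∈ Finset.Icc 1 k, c i * a i ^ 2 := by
  induction k, hk using Nat.le_induction with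
  | base => simp only [Finset.Icc_self, Finset.sum_singleton, hd₁]; ring
  | succ k hk ih =>
    rw [Finset.sum_Icc_succ_top (by lia), Finset.sum_Icc_succ_top (by lia),
      ih fun i h₂ hi => hd i h₂ (by lia), hd (k + 1) (by lia) le_rfl, Nat.add_sub_cancel]
    ring

theorem sum_mul_le_of_backstepping {m : ℕ} (hm : 2 ≤ m) {c₀ cm u : ℝ}
    (hc : ∀ i ∈ Finset.Icc 1 (m - 1), c₀ ≤ c i) (hd₁ : d 1 = a 2 - c 1 * a 1)
    (hd : ∀ i, 2 ≤ i → i ≤ m - 1 → d i = a (i + 1) - a (i - 1) - c i * a i)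
    (hdm : d m = -a (m - 1) - cm * a m + u) :
    ∑ i ∈ Finset.Icc 1 m, a i * d i ≤
      -c₀ * ∑ i ∈ Finset.Icc 1 m, a i ^ 2 - (cm - c₀) * a m ^ 2 + a m * u := by
  obtain ⟨k, rfl⟩ : ∃ k, m = k + 1 := ⟨m - 1, by lia⟩
  rw [Nat.add_sub_cancel] at hc hd hdm
  have hdamp : c₀ * ∑ i ∈ Finset.Icc 1 k, a i ^ 2 ≤ ∑ i ∈ Finset.Icc 1 k, c i * a i ^ 2 := by
    rw [Finset.mul_sum]
    exact Finset.sum_le_sum fun i hi => mul_le_mul_of_nonneg_right (hc i hi) (sq_nonneg _)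
  rw [Finset.sum_Icc_succ_top (by lia), Finset.sum_Icc_succ_top (by lia),
    sum_mul_eq_of_backstepping (by lia) hd₁ hd, hdm]
  linarith

end BacksteppingChain

section Lyapunov

theorem le_mul_exp_of_deriv_le {V : ℝ → ℝ} {r t : ℝ}
    (hV : ∀ s, 0 ≤ s → DifferentiableAt ℝ V s) (hV' : ∀ s, 0 ≤ s → deriv V s ≤ r * V s)
    (ht : 0 ≤ t) : V t ≤ V 0 * Real.exp (r * t) := by
  have gronwall := le_gronwallBound_of_liminf_deriv_right_le (f := V) (f' := deriv V) (δ := V 0)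
    (K := r) (ε := 0) (fun s hs => (hV s hs.1).continuousAt.continuousWithinAt)
    (fun s hs _ hr => (hV s hs.1).hasDerivAt.hasDerivWithinAt.liminf_right_slope_le hr) le_rfl
    (fun s hs => by simpa using hV' s hs.1) t (right_mem_Icc.2 ht)
  rwa [gronwallBound_ε0, sub_zero] at gronwall

theorem le_mul_exp_of_lyapunov {V Ω : ℝ → ℝ} {k K ν t : ℝ} (hk : 0 < k) (hK : 0 < K) (hν : 0 ≤ ν)
    (hVΩ : ∀ s, V s ∈ Icc (k * Ω s) (K * Ω s)) (hV : ∀ s, 0 ≤ s → DifferentiableAt ℝ V s)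
    (hV' : ∀ s, 0 ≤ s → deriv V s ≤ -ν * Ω s) (ht : 0 ≤ t) :
    Ω t ≤ K / k * Ω 0 * Real.exp (-(ν / K) * t) := by
  have hdecay : V t ≤ V 0 * Real.exp (-(ν / K) * t) := by
    refine le_mul_exp_of_deriv_le hV (fun s hs => (hV' s hs).trans ?_) ht
    rw [neg_mul, neg_mul, neg_le_neg_iff, div_mul_eq_mul_div, div_le_iff₀ hK, mul_assoc]
    exact mul_le_mul_of_nonneg_left ((hVΩ s).2.trans_eq (mul_comm _ _)) hν
  calc
    Ω t ≤ V t / k := by rw [le_div_iff₀' hk]; exact (hVΩ t).1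
    _ ≤ K * Ω 0 * Real.exp (-(ν / K) * t) / k := by
      gcongr
      exact hdecay.trans (by gcongr; exact (hVΩ 0).2)
    _ = K / k * Ω 0 * Real.exp (-(ν / K) * t) := by ring

theorem exists_lyapunov_weights {q κ K c₀ R η : ℝ} (hq : 0 < q) (hκ : 0 < κ) (hK : 0 < K)
    (hc₀ : 0 < c₀) (hR : 0 ≤ R) (hη : 0 < η) :
    ∃ a b γ ν : ℝ, 0 < a ∧ 0 < b ∧ 0 < γ ∧ 0 < ν ∧
      ∀ cm x N S r z u : ℝ, γ ≤ cm → 0 ≤ x → 0 ≤ N → 0 ≤ S →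
        r ^ 2 ≤ R * S → u ^ 2 ≤ η * (x + N) →
        (-κ * x + K * N) + a * (-q * N + 2 / q * r ^ 2)
          + b * (2 * (-c₀ * S - (cm - c₀) * z ^ 2 + z * u)) ≤ -ν * (x + N + S) := by
  set a := 2 * K / q with ha
  set b := (a * (2 / q) * R + 1) / c₀ with hb
  set μ := min κ K
  have a_pos : 0 < a := by positivity
  have b_pos : 0 < b := by positivity
  have μ_pos : 0 < μ := lt_min hκ hK
  refine ⟨a, b, c₀ + η * b / μ, min (μ / 2) (b * c₀), a_pos, b_pos, by positivity, by positivity,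
    fun cm x N S r z u hcm hx hN hS hr hu => ?_⟩
  have heat_gain : K * N + a * (-q * N) = -K * N := by rw [ha]; field_simp; ring
  have boundary_absorbed : a * (2 / q * r ^ 2) ≤ b * c₀ * S := calc
    a * (2 / q * r ^ 2) ≤ a * (2 / q * (R * S)) := by gcongr
    _ ≤ (a * (2 / q) * R + 1) * S := by linarith
    _ = b * c₀ * S := by rw [hb]; field_simp
  have input_absorbed : b * (2 * (z * u)) ≤ μ / 2 * (x + N) + b * (2 * (cm - c₀)) * z ^ 2 := calc
    b * (2 * (z * u)) = 2 * u * (b * z) := by ring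
    _ ≤ μ / (2 * η) * u ^ 2 + (μ / (2 * η))⁻¹ * (b * z) ^ 2 :=
      two_mul_le_add_mul_sq (by positivity)
    _ = μ / (2 * η) * u ^ 2 + b * (2 * (η * b / μ)) * z ^ 2 := by field_simp
    _ ≤ μ / (2 * η) * (η * (x + N)) + b * (2 * (cm - c₀)) * z ^ 2 := by gcongr; linarith
    _ = _ := by field_simp
  have hx_le : μ * x ≤ κ * x := by gcongr; exact min_le_left _ _
  have hN_le : μ * N ≤ K * N := by gcongr; exact min_le_right _ _
  have rate_left : min (μ / 2) (b * c₀) * (x + N) ≤ μ / 2 * (x + N) := by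
    gcongr; exact min_le_left _ _
  have rate_right : min (μ / 2) (b * c₀) * S ≤ b * c₀ * S := by gcongr; exact min_le_right _ _
  linarith

end Lyapunov

section TargetSystem

/-- A classical solution of the closed-loop target system: the heat equation on `[0,1]` with
`w(0,t) = 0`, the ODE for `X` driven by `w_x(0,t)`, and the backstepping variables
`y 1, …, y m` (indexed from `1`; other values of the index are irrelevant). As `w`, `X` and `y i`
are functions on all of `ℝ`, the equations are imposed for `t ≥ 0` only. -/
structure IsTargetSolution {n : ℕ} (q : ℝ) (M : Matrix (Fin n) (Fin n) ℝ) (B : Fin n → ℝ) (m : ℕ)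
    (c : ℕ → ℝ) (cm : ℝ) (D : ℝ → ℝ) (E : Fin n → ℝ) (w : ℝ → ℝ → ℝ) (X : ℝ → Fin n → ℝ)
    (y : ℕ → ℝ → ℝ) : Prop where
  contDiff : ContDiff ℝ 2 (uncurry w)
  heat : ∀ x ∈ Icc (0 : ℝ) 1, ∀ t : ℝ, 0 ≤ t →
    partialT w x t = q * iteratedDeriv 2 (fun s => w s t) x
  dirichlet : ∀ t : ℝ, 0 ≤ t → w 0 t = 0
  differentiable_X : Differentiable ℝ X
  deriv_X : ∀ t : ℝ, 0 ≤ t → deriv X t = M *ᵥ X t + partialX w 0 t • B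
  differentiable_y : ∀ i, 1 ≤ i → i ≤ m → Differentiable ℝ (y i)
  y_one : ∀ t : ℝ, 0 ≤ t → y 1 t = w 1 t
  y_two : ∀ t : ℝ, 0 ≤ t → y 2 t = partialT w 1 t + c 1 * y 1 t
  deriv_y : ∀ i, 2 ≤ i → i ≤ m - 1 → ∀ t : ℝ, 0 ≤ t →
    deriv (y i) t = y (i + 1) t - y (i - 1) t - c i * y i t
  deriv_y_last : ∀ t : ℝ, 0 ≤ t →
    deriv (y m) t = -y (m - 1) t - cm * y m t + E ⬝ᵥ X t - ∫ σ in (0 : ℝ)..1, D σ * w σ t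

/-- The Lyapunov function `XᵀPX + a(‖w‖² + ‖w_x‖²) + b Σ y_i²` of the target system. -/
noncomputable def lyapunov {n : ℕ} (P : Matrix (Fin n) (Fin n) ℝ) (a b : ℝ) (m : ℕ)
    (w : ℝ → ℝ → ℝ) (X : ℝ → Fin n → ℝ) (y : ℕ → ℝ → ℝ) (t : ℝ) : ℝ :=
  X t ⬝ᵥ P *ᵥ X t
    + a * ((∫ x in (0 : ℝ)..1, w x t ^ 2) + ∫ x in (0 : ℝ)..1, partialX w x t ^ 2)
    + b * ∑ i ∈ Finset.Icc 1 m, y i t ^ 2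

variable {n m : ℕ} {q cm t : ℝ} {M P Q : Matrix (Fin n) (Fin n) ℝ} {B E : Fin n → ℝ}
  {c : ℕ → ℝ} {D : ℝ → ℝ} {w : ℝ → ℝ → ℝ} {X : ℝ → Fin n → ℝ} {y : ℕ → ℝ → ℝ}

theorem lyapunov_mem_Icc {p₁ p₂ : ℝ}
    (hP : ∀ x : Fin n → ℝ, x ⬝ᵥ P *ᵥ x ∈ Icc (p₁ * ∑ i, x i ^ 2) (p₂ * ∑ i, x i ^ 2))
    (a b : ℝ) (m : ℕ) (w : ℝ → ℝ → ℝ) (X : ℝ → Fin n → ℝ) (y : ℕ → ℝ → ℝ) (t : ℝ) :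
    lyapunov P a b m w X y t ∈ Icc (min p₁ (min a b) * Omega10 n m w X y t)
      (max p₂ (max a b) * Omega10 n m w X y t) := by
  set N := (∫ x in (0 : ℝ)..1, w x t ^ 2) + ∫ x in (0 : ℝ)..1, partialX w x t ^ 2 with hN
  have N_nonneg : 0 ≤ N := add_nonneg (intervalIntegral_sq_nonneg zero_le_one _)
    (intervalIntegral_sq_nonneg zero_le_one _)
  have omega_eq : Omega10 n m w X y t =
      ∑ i, X t i ^ 2 + N + ∑ i ∈ Finset.Icc 1 m, y i t ^ 2 := by
    simp only [Omega10, hN, partialX]; ring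
  rw [omega_eq, lyapunov, ← hN]
  constructor
  · calc
      _ = min p₁ (min a b) * ∑ i, X t i ^ 2 + min p₁ (min a b) * N
          + min p₁ (min a b) * ∑ i ∈ Finset.Icc 1 m, y i t ^ 2 := by ring
      _ ≤ p₁ * ∑ i, X t i ^ 2 + a * N + b * ∑ i ∈ Finset.Icc 1 m, y i t ^ 2 := by
        gcongr <;> simp
      _ ≤ _ := by gcongr; exact (hP _).1
  · calc
      _ ≤ p₂ * ∑ i, X t i ^ 2 + a * N + b * ∑ i ∈ Finset.Icc 1 m, y i t ^ 2 := by
        gcongr; exact (hP _).2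
      _ ≤ max p₂ (max a b) * ∑ i, X t i ^ 2 + max p₂ (max a b) * N
          + max p₂ (max a b) * ∑ i ∈ Finset.Icc 1 m, y i t ^ 2 := by
        gcongr <;> simp
      _ = _ := by ring

namespace IsTargetSolution

theorem partialT_eq (h : IsTargetSolution q M B m c cm D E w X y) (ht : 0 ≤ t) :
    ∀ x ∈ uIcc (0 : ℝ) 1, partialT w x t = q * partialX (partialX w) x t := by
  intro x hx
  rw [uIcc_of_le zero_le_one] at hx
  rw [h.heat x hx t ht, iteratedDeriv_succ, iteratedDeriv_one]
  rfl

theorem partialT_zero (h : IsTargetSolution q M B m c cm D E w X y) (ht : 0 ≤ t) :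
    partialT w 0 t = 0 := by
  have hw := hasDerivAt_partialT (h.contDiff.differentiable two_ne_zero) 0 t
  rw [partialT, deriv_eq_of_eqOn_Ici hw.differentiableAt (differentiableAt_const 0) h.dirichlet ht,
    deriv_const]

theorem deriv_y_one (h : IsTargetSolution q M B m c cm D E w X y) (hm : 1 ≤ m) (ht : 0 ≤ t) :
    deriv (y 1) t = y 2 t - c 1 * y 1 t := by
  have hw := hasDerivAt_partialT (h.contDiff.differentiable two_ne_zero) 1 t
  rw [h.y_two t ht, add_sub_cancel_right]
  exact deriv_eq_of_eqOn_Ici (h.differentiable_y 1 le_rfl hm t) hw.differentiableAt h.y_one ht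

theorem sq_boundary_le (h : IsTargetSolution q M B m c cm D E w X y) (hm : 2 ≤ m) (ht : 0 ≤ t) :
    (q * w 1 t + partialT w 1 t) ^ 2 ≤
      ((q - c 1) ^ 2 + 1) * ∑ i ∈ Finset.Icc 1 m, y i t ^ 2 := by
  have hy : y 1 t ^ 2 + y 2 t ^ 2 ≤ ∑ i ∈ Finset.Icc 1 m, y i t ^ 2 := calc
    y 1 t ^ 2 + y 2 t ^ 2 = ∑ i ∈ Finset.Icc 1 2, y i t ^ 2 := by
      simp [Finset.sum_Icc_succ_top]
    _ ≤ _ := Finset.sum_le_sum_of_subset_of_nonneg (Finset.Icc_subset_Icc_right hm)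
      fun _ _ _ => sq_nonneg _
  calc
    (q * w 1 t + partialT w 1 t) ^ 2 = ((q - c 1) * y 1 t + y 2 t) ^ 2 := by
      rw [h.y_two t ht, h.y_one t ht]; ring
    _ ≤ ((q - c 1) ^ 2 + 1) * (y 1 t ^ 2 + y 2 t ^ 2) := by
      linarith [sq_nonneg (y 1 t - (q - c 1) * y 2 t)]
    _ ≤ _ := by gcongr

theorem sq_input_le (h : IsTargetSolution q M B m c cm D E w X y)
    (hD : MemLp D 2 (volume.restrict (Icc 0 1))) (ht : 0 ≤ t) :
    (E ⬝ᵥ X t - ∫ σ in (0 : ℝ)..1, D σ * w σ t) ^ 2 ≤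
      2 * (∑ i, E i ^ 2 + ∫ σ in (0 : ℝ)..1, D σ ^ 2)
        * (∑ i, X t i ^ 2 + dissipation w t) := by
  have hD₀ : 0 ≤ ∫ σ in (0 : ℝ)..1, D σ ^ 2 := intervalIntegral_sq_nonneg zero_le_one D
  have hN : 0 ≤ dissipation w t := dissipation_nonneg w t
  have hEX : (E ⬝ᵥ X t) ^ 2 ≤ (∑ i, E i ^ 2) * ∑ i, X t i ^ 2 :=
    Finset.sum_mul_sq_le_sq_mul_sq _ _ _
  have hDw : (∫ σ in (0 : ℝ)..1, D σ * w σ t) ^ 2 ≤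
      (∫ σ in (0 : ℝ)..1, D σ ^ 2) * dissipation w t := calc
    _ ≤ (∫ σ in (0 : ℝ)..1, D σ ^ 2) * ∫ σ in (0 : ℝ)..1, w σ t ^ 2 :=
      sq_intervalIntegral_mul_le zero_le_one hD <|
        memLp_restrict_of_isCompact isCompact_Icc measurableSet_Icc
          (h.contDiff.continuous.uncurry_right t).continuousOn
    _ ≤ _ := by
      gcongr
      exact integral_sq_le_dissipation (h.contDiff.of_le one_le_two) (h.dirichlet t ht)
  calc
    _ ≤ 2 * ((E ⬝ᵥ X t) ^ 2 + (∫ σ in (0 : ℝ)..1, D σ * w σ t) ^ 2) := by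
      linarith [sq_nonneg (E ⬝ᵥ X t + ∫ σ in (0 : ℝ)..1, D σ * w σ t)]
    _ ≤ 2 * ((∑ i, E i ^ 2) * ∑ i, X t i ^ 2
          + (∫ σ in (0 : ℝ)..1, D σ ^ 2) * dissipation w t) := by gcongr
    _ ≤ _ := by
      have hcross : 0 ≤ (∑ i, E i ^ 2) * dissipation w t
          + (∫ σ in (0 : ℝ)..1, D σ ^ 2) * ∑ i, X t i ^ 2 := by positivity
      linarith

theorem omega10_le (h : IsTargetSolution q M B m c cm D E w X y) (ht : 0 ≤ t) :
    Omega10 n m w X y t ≤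
      2 * (∑ i, X t i ^ 2 + dissipation w t + ∑ i ∈ Finset.Icc 1 m, y i t ^ 2) := by
  have hX : 0 ≤ ∑ i, X t i ^ 2 := by positivity
  have hy : 0 ≤ ∑ i ∈ Finset.Icc 1 m, y i t ^ 2 := by positivity
  have hw : ∫ x in (0 : ℝ)..1, w x t ^ 2 ≤ dissipation w t :=
    integral_sq_le_dissipation (h.contDiff.of_le one_le_two) (h.dirichlet t ht)
  have hwX : ∫ x in (0 : ℝ)..1, deriv (fun s => w s t) x ^ 2 ≤ dissipation w t :=
    le_add_of_nonneg_right (intervalIntegral_sq_nonneg zero_le_one _)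
  rw [Omega10]
  linarith

theorem hasDerivAt_lyapunov (h : IsTargetSolution q M B m c cm D E w X y) (hP : P.IsSymm)
    (a b : ℝ) (ht : 0 ≤ t) :
    HasDerivAt (lyapunov P a b m w X y)
      (2 * (X t ⬝ᵥ P *ᵥ (M *ᵥ X t + partialX w 0 t • B))
        + a * (2 * (partialX w 1 t * (q * w 1 t + partialT w 1 t)) - 2 * q * dissipation w t)
        + b * (2 * ∑ i ∈ Finset.Icc 1 m, y i t * deriv (y i) t)) t := by
  have hX : HasDerivAt X (M *ᵥ X t + partialX w 0 t • B) t :=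
    h.deriv_X t ht ▸ (h.differentiable_X t).hasDerivAt
  have hw := hasDerivAt_heatEnergy_of_dirichlet h.contDiff (h.partialT_eq ht) (h.dirichlet t ht)
    (h.partialT_zero ht)
  have hy : HasDerivAt (fun s => ∑ i ∈ Finset.Icc 1 m, y i s ^ 2)
      (2 * ∑ i ∈ Finset.Icc 1 m, y i t * deriv (y i) t) t := by
    rw [Finset.mul_sum]
    refine .fun_sum fun i hi => ?_
    obtain ⟨h₁, him⟩ := Finset.mem_Icc.1 hi
    simpa [mul_assoc] using (h.differentiable_y i h₁ him t).hasDerivAt.fun_pow 2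
  exact ((hasDerivAt_quadForm hP hX).fun_add (hw.const_mul a)).fun_add (hy.const_mul b)

theorem deriv_lyapunov_le (h : IsTargetSolution q M B m c cm D E w X y) (hq : 0 < q) (hm : 2 ≤ m)
    (hP : P.IsSymm) {κ K c₀ a b : ℝ} (hK : 0 ≤ K) (ha : 0 ≤ a) (hb : 0 ≤ b)
    (hdiss : ∀ (x : Fin n → ℝ) (v : ℝ),
      2 * (x ⬝ᵥ P *ᵥ (M *ᵥ x + v • B)) ≤ -κ * ∑ i, x i ^ 2 + K * v ^ 2)
    (hc₀ : ∀ i ∈ Finset.Icc 1 (m - 1), c₀ ≤ c i) (ht : 0 ≤ t) :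
    deriv (lyapunov P a b m w X y) t ≤
      (-κ * ∑ i, X t i ^ 2 + K * 2 * dissipation w t)
        + a * (-q * dissipation w t + 2 / q * (q * w 1 t + partialT w 1 t) ^ 2)
        + b * (2 * (-c₀ * ∑ i ∈ Finset.Icc 1 m, y i t ^ 2 - (cm - c₀) * y m t ^ 2
          + y m t * (E ⬝ᵥ X t - ∫ σ in (0 : ℝ)..1, D σ * w σ t))) := by
  rw [(h.hasDerivAt_lyapunov hP a b ht).deriv]
  gcongr
  · refine (hdiss _ _).trans ?_
    rw [mul_assoc K]
    gcongr
    exact sq_partialX_le_dissipation h.contDiff (left_mem_Icc.2 zero_le_one)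
  · exact two_mul_flux_mul_sub_dissipation_le hq h.contDiff _
  · exact sum_mul_le_of_backstepping (a := fun i => y i t) (d := fun i => deriv (y i) t) hm hc₀
      (h.deriv_y_one (by lia) ht) (fun i h₂ hi => h.deriv_y i h₂ hi t ht)
      ((h.deriv_y_last t ht).trans (add_sub_assoc _ _ _))

end IsTargetSolution

theorem exists_deriv_lyapunov_le (hq : 0 < q) (hP : P.IsSymm) (hQ : Q.PosDef)
    (hLyap : P * M + Mᵀ * P = -Q) (B : Fin n → ℝ) (hm : 2 ≤ m)
    (hD : MemLp D 2 (volume.restrict (Icc 0 1))) (E : Fin n → ℝ)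
    (hc : ∀ i, 1 ≤ i → i ≤ m - 1 → 0 < c i) :
    ∃ a b γ ν : ℝ, 0 < a ∧ 0 < b ∧ 0 < γ ∧ 0 < ν ∧ ∀ (cm : ℝ) (w : ℝ → ℝ → ℝ)
      (X : ℝ → Fin n → ℝ) (y : ℕ → ℝ → ℝ), γ ≤ cm → IsTargetSolution q M B m c cm D E w X y →
        ∀ t, 0 ≤ t → deriv (lyapunov P a b m w X y) t ≤ -ν * Omega10 n m w X y t := by
  obtain ⟨κ, K, hκ, hK, hdiss⟩ := exists_dissipation_of_lyapunov hP hQ hLyap B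
  obtain ⟨j, hj, hc₀⟩ : ∃ j ∈ Finset.Icc 1 (m - 1), ∀ i ∈ Finset.Icc 1 (m - 1), c j ≤ c i :=
    Finset.exists_min_image _ c (Finset.nonempty_Icc.2 (by lia))
  obtain ⟨hj₁, hjm⟩ := Finset.mem_Icc.1 hj
  have hD₀ : 0 ≤ ∫ σ in (0 : ℝ)..1, D σ ^ 2 := intervalIntegral_sq_nonneg zero_le_one D
  obtain ⟨a, b, γ, ν, ha, hb, hγ, hν, hweights⟩ := exists_lyapunov_weights hq hκ
    (mul_pos hK two_pos) (hc j hj₁ hjm) (R := (q - c 1) ^ 2 + 1) (by positivity)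
    (η := 2 * (∑ i, E i ^ 2 + ∫ σ in (0 : ℝ)..1, D σ ^ 2) + 1) (by positivity)
  refine ⟨a, b, γ, ν / 2, ha, hb, hγ, half_pos hν, fun cm w X y hcm h t ht => ?_⟩
  have hN : 0 ≤ dissipation w t := dissipation_nonneg w t
  calc
    deriv (lyapunov P a b m w X y) t ≤ _ :=
      h.deriv_lyapunov_le hq hm hP hK.le ha.le hb.le hdiss hc₀ ht
    _ ≤ -ν * (∑ i, X t i ^ 2 + dissipation w t + ∑ i ∈ Finset.Icc 1 m, y i t ^ 2) :=
      hweights cm _ _ _ _ _ _ hcm (by positivity) hN (by positivity) (h.sq_boundary_le hm ht)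
        ((h.sq_input_le hD ht).trans (by gcongr; linarith))
    _ ≤ -(ν / 2) * Omega10 n m w X y t := by
      linarith [mul_le_mul_of_nonneg_left (h.omega10_le ht) (half_pos hν).le]

theorem stmt10_general (hq : 0 < q) (hP : P.PosDef) (hQ : Q.PosDef)
    (hLyap : P * M + Mᵀ * P = -Q) (B : Fin n → ℝ) (hm : 2 ≤ m)
    (hD : MemLp D 2 (volume.restrict (Icc 0 1))) (E : Fin n → ℝ)
    (hc : ∀ i, 1 ≤ i → i ≤ m - 1 → 0 < c i) :
    ∃ cmstar Υ lam : ℝ, 0 < cmstar ∧ 0 < Υ ∧ 0 < lam ∧ ∀ (cm : ℝ) (w : ℝ → ℝ → ℝ)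
      (X : ℝ → Fin n → ℝ) (y : ℕ → ℝ → ℝ), cmstar ≤ cm →
        IsTargetSolution q M B m c cm D E w X y → ∀ t : ℝ, 0 ≤ t →
          Omega10 n m w X y t ≤ Υ * Omega10 n m w X y 0 * Real.exp (-lam * t) := by
  have hPsymm : P.IsSymm := Matrix.isHermitian_iff_isSymm.1 hP.isHermitian
  obtain ⟨a, b, γ, ν, ha, hb, hγ, hν, hderiv⟩ :=
    exists_deriv_lyapunov_le hq hPsymm hQ hLyap B hm hD E hc
  obtain ⟨p₁, p₂, hp₁, hp₂, hPx⟩ := exists_forall_quadForm_mem_Icc hP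
  refine ⟨γ, max p₂ (max a b) / min p₁ (min a b), ν / max p₂ (max a b), hγ, by positivity,
    by positivity, fun cm w X y hcm h t ht => ?_⟩
  exact le_mul_exp_of_lyapunov (by positivity) (by positivity) hν.le
    (lyapunov_mem_Icc hPx a b m w X y)
    (fun s hs => (h.hasDerivAt_lyapunov hPsymm a b hs).differentiableAt)
    (hderiv cm w X y hcm h) ht

end TargetSystem

/-- exponential stability of the full target system consisting of the
PDE–ODE subsystem together with the chain of ODE-backstepping variables `y₁,…,y_m`. -/
theorem stmt10
    (q : ℝ) (hq : 0 < q) (n : ℕ) (hn : 1 ≤ n)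
    (M : Matrix (Fin n) (Fin n) ℝ) (B : Fin n → ℝ)
    (P Q : Matrix (Fin n) (Fin n) ℝ) (hP : P.PosDef) (hQ : Q.PosDef)
    (hLyap : P * M + Mᵀ * P = -Q)
    (m : ℕ) (hm : 2 ≤ m)
    (D : ℝ → ℝ) (hD : ContinuousOn D (Icc (0:ℝ) 1))
    (E : Fin n → ℝ)
    (c : ℕ → ℝ) (hc : ∀ i, 1 ≤ i → i ≤ m - 1 → 0 < c i) :
    ∃ cmstar : ℝ, 0 < cmstar ∧
      ∀ cm : ℝ, cmstar ≤ cm →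
        ∃ Υ lam : ℝ, 0 < Υ ∧ 0 < lam ∧
          ∀ (w : ℝ → ℝ → ℝ) (X : ℝ → Fin n → ℝ) (y : ℕ → ℝ → ℝ),
            ContDiff ℝ (⊤ : ℕ∞) (Function.uncurry w) →
            (∀ x ∈ Icc (0:ℝ) 1, ∀ t : ℝ, 0 ≤ t →
              deriv (fun s => w x s) t = q * iteratedDeriv 2 (fun s => w s t) x) →
            (∀ t : ℝ, 0 ≤ t → w 0 t = 0) →
            ContDiff ℝ (⊤ : ℕ∞) X →
            (∀ t : ℝ, 0 ≤ t →
              deriv X t = M.mulVec (X t) + (deriv (fun s => w s t) 0) • B) →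
            (∀ i, 1 ≤ i → i ≤ m → Differentiable ℝ (y i)) →
            (∀ t : ℝ, 0 ≤ t → y 1 t = w 1 t) →
            (∀ t : ℝ, 0 ≤ t → y 2 t = deriv (fun s => w 1 s) t + c 1 * y 1 t) →
            (∀ i, 2 ≤ i → i ≤ m - 1 → ∀ t : ℝ, 0 ≤ t →
              deriv (y i) t = y (i+1) t - y (i-1) t - c i * y i t) →
            (∀ t : ℝ, 0 ≤ t →
              deriv (y m) t = -(y (m-1) t) - cm * y m t + E ⬝ᵥ X t
                - ∫ σ in (0:ℝ)..1, D σ * w σ t) →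
            ∀ t : ℝ, 0 ≤ t →
              Omega10 n m w X y t ≤ Υ * Omega10 n m w X y 0 * Real.exp (-lam * t) := by
  obtain ⟨cmstar, Υ, lam, hcmstar, hΥ, hlam, hdecay⟩ := stmt10_general hq hP hQ hLyap B hm
    (memLp_restrict_of_isCompact isCompact_Icc measurableSet_Icc hD) E hc
  exact ⟨cmstar, hcmstar, fun cm hcm => ⟨Υ, lam, hΥ, hlam,
    fun w X y hw heat hw₀ hX hdX hy hy₁ hy₂ hdy hdym => hdecay cm w X y hcm
      ⟨hw.of_le (WithTop.coe_le_coe.2 le_top), heat, hw₀, hX.differentiable (by simp), hdX, hy,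
        hy₁, hy₂, hdy, hdym⟩⟩⟩
end

section
/- There exist constants Υ_e > 0 and λ_e > 0, depending only on q, A, A_z, C_X, C_z, P₀, P₂, ϑ, θ, P̄, Q̄ (and not on the particular solution), such that every smooth solution (ũ, X̃, Z̃) of the observer error system satisfies Θ_e(t) ≤ Υ_e · (Θ_e(0)² + ũ_x(0,0)²)^{1/2} · e^{−λ_e t} for all t ≥ 0, where Θ_e(t) = (Σ_{i=0}^{2m} ‖∂_x^i ũ(·,t)‖² + |Z̃(t)|² + |X̃(t)|²)^{1/2}. -/
open scoped Matrix
open Set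

/-- `Θ_e(t)² = Σ_{i=0}^{2m} ‖∂_x^i ũ(·,t)‖² + |Z̃(t)|² + |X̃(t)|²`. -/
noncomputable def ThetaESq (n m : ℕ) (tu : ℝ → ℝ → ℝ)
    (tX : ℝ → Fin n → ℝ) (tZ : ℝ → Fin m → ℝ) (t : ℝ) : ℝ :=
  (∑ i ∈ Finset.range (2*m + 1),
    ∫ x in (0:ℝ)..1, (iteratedDeriv i (fun s => tu s t) x) ^ 2)
  + (∑ i, (tZ t i) ^ 2) + ∑ i, (tX t i) ^ 2

/-!
Stack `V = (Z̃, X̃)`, `b = (P₂, P₀)` and `k = (ϑ, θ)`. By the kernel equations, `w = u + k · V`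
solves the heat equation with homogeneous Dirichlet conditions, and `dV/dt = Ā V - wₓ(0) b`. The
heat equation propagates the boundary conditions to all even spatial derivatives of `w`, so Poincaré
inequalities make every `‖∂ₓⁱ w‖²` decay with rate `2q`. Since `wₓ(0)` is bounded by the `H²` norm
of `w`, the functional `VᵀPV + R ‖w‖²_{H^N}` decays exponentially once `R` is large, and
`(u, V) ↦ (w, V)` is a bounded change of variables with the bounded inverse `u = w - k · V`.
-/

open Function intervalIntegral
open scoped ContDiff

section PartialDerivatives

variable {E : Type*} [NormedAddCommGroup E] [NormedSpace ℝ E] {F : ℝ → ℝ → E}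

/-- The partial derivative `∂ₓF` of a function `F` of space and time, in curried form; higher
spatial derivatives are its iterates `spaceDeriv^[i] F`. -/
noncomputable def spaceDeriv (F : ℝ → ℝ → E) (x t : ℝ) : E := deriv (fun s => F s t) x

/-- The partial derivative `∂ₜF` of a function `F` of space and time, in curried form. -/
noncomputable def timeDeriv (F : ℝ → ℝ → E) (x t : ℝ) : E := deriv (fun s => F x s) t

theorem iterate_spaceDeriv_apply (F : ℝ → ℝ → E) (i : ℕ) (x t : ℝ) :
    spaceDeriv^[i] F x t = iteratedDeriv i (fun s => F s t) x := by
  induction i generalizing F with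
  | zero => simp
  | succ i ih => rw [iterate_succ_apply, ih, iteratedDeriv_succ']; rfl

theorem hasDerivAt_space_fderiv (hF : ContDiff ℝ ∞ (uncurry F)) (x t : ℝ) :
    HasDerivAt (fun s => F s t) (fderiv ℝ (uncurry F) (x, t) (1, 0)) x :=
  HasFDerivAt.comp_hasDerivAt (f := fun s => (s, t)) x
    (hF.differentiable (by simp) (x, t)).hasFDerivAt
    ((hasDerivAt_id' x).prodMk (hasDerivAt_const x t))

theorem hasDerivAt_time_fderiv (hF : ContDiff ℝ ∞ (uncurry F)) (x t : ℝ) :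
    HasDerivAt (fun s => F x s) (fderiv ℝ (uncurry F) (x, t) (0, 1)) t :=
  HasFDerivAt.comp_hasDerivAt (f := fun s => (x, s)) t
    (hF.differentiable (by simp) (x, t)).hasFDerivAt
    ((hasDerivAt_const t x).prodMk (hasDerivAt_id' t))

theorem hasDerivAt_spaceDeriv (hF : ContDiff ℝ ∞ (uncurry F)) (x t : ℝ) :
    HasDerivAt (fun s => F s t) (spaceDeriv F x t) x :=
  (hasDerivAt_space_fderiv hF x t).differentiableAt.hasDerivAt

theorem hasDerivAt_timeDeriv (hF : ContDiff ℝ ∞ (uncurry F)) (x t : ℝ) :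
    HasDerivAt (fun s => F x s) (timeDeriv F x t) t :=
  (hasDerivAt_time_fderiv hF x t).differentiableAt.hasDerivAt

theorem uncurry_spaceDeriv (hF : ContDiff ℝ ∞ (uncurry F)) :
    uncurry (spaceDeriv F) = fun p => fderiv ℝ (uncurry F) p (1, 0) :=
  funext fun p => (hasDerivAt_space_fderiv hF p.1 p.2).deriv

theorem uncurry_timeDeriv (hF : ContDiff ℝ ∞ (uncurry F)) :
    uncurry (timeDeriv F) = fun p => fderiv ℝ (uncurry F) p (0, 1) :=
  funext fun p => (hasDerivAt_time_fderiv hF p.1 p.2).deriv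

theorem contDiff_spaceDeriv (hF : ContDiff ℝ ∞ (uncurry F)) :
    ContDiff ℝ ∞ (uncurry (spaceDeriv F)) := by
  rw [uncurry_spaceDeriv hF]
  exact (hF.fderiv_right (by simp)).clm_apply contDiff_const

theorem contDiff_timeDeriv (hF : ContDiff ℝ ∞ (uncurry F)) :
    ContDiff ℝ ∞ (uncurry (timeDeriv F)) := by
  rw [uncurry_timeDeriv hF]
  exact (hF.fderiv_right (by simp)).clm_apply contDiff_const

theorem contDiff_iterate_spaceDeriv (hF : ContDiff ℝ ∞ (uncurry F)) (i : ℕ) :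
    ContDiff ℝ ∞ (uncurry (spaceDeriv^[i] F)) := by
  induction i generalizing F with
  | zero => exact hF
  | succ _ ih => exact ih (contDiff_spaceDeriv hF)

theorem contDiff_slice (hF : ContDiff ℝ ∞ (uncurry F)) (t : ℝ) :
    ContDiff ℝ ∞ (fun x => F x t) :=
  hF.comp (contDiff_id.prodMk contDiff_const)

theorem timeDeriv_spaceDeriv (hF : ContDiff ℝ ∞ (uncurry F)) :
    timeDeriv (spaceDeriv F) = spaceDeriv (timeDeriv F) := by
  funext x t
  have hdiff : DifferentiableAt ℝ (fderiv ℝ (uncurry F)) (x, t) :=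
    (hF.fderiv_right (m := ∞) (by simp)).differentiable (by simp) (x, t)
  have hsymm : IsSymmSndFDerivAt ℝ (uncurry F) (x, t) :=
    hF.contDiffAt.isSymmSndFDerivAt (by
      rw [minSmoothness_of_isRCLikeNormedField]
      exact WithTop.coe_le_coe.2 le_top)
  calc timeDeriv (spaceDeriv F) x t
      = fderiv ℝ (fderiv ℝ (uncurry F)) (x, t) (0, 1) (1, 0) := by
        refine (hasDerivAt_time_fderiv (contDiff_spaceDeriv hF) x t).deriv.trans ?_
        rw [uncurry_spaceDeriv hF, fderiv_clm_apply hdiff (by fun_prop)]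
        simp
    _ = fderiv ℝ (fderiv ℝ (uncurry F)) (x, t) (1, 0) (0, 1) := hsymm.eq _ _
    _ = spaceDeriv (timeDeriv F) x t := by
        refine Eq.trans ?_ (hasDerivAt_space_fderiv (contDiff_timeDeriv hF) x t).deriv.symm
        rw [uncurry_timeDeriv hF, fderiv_clm_apply hdiff (by fun_prop)]
        simp

theorem hasDerivAt_integral_timeDeriv (hF : ContDiff ℝ ∞ (uncurry F)) (a b t : ℝ) :
    HasDerivAt (fun s => ∫ x in a..b, F x s) (∫ x in a..b, timeDeriv F x t) t := by
  have hF' := contDiff_timeDeriv hF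
  obtain ⟨C, hC⟩ := (isCompact_uIcc.prod (isCompact_Icc (a := t - 1) (b := t + 1))
    : IsCompact (uIcc a b ×ˢ _)).exists_bound_of_continuousOn hF'.continuous.continuousOn
  exact (hasDerivAt_integral_of_dominated_loc_of_deriv_le
    (F := fun s x => F x s) (F' := fun s x => timeDeriv F x s)
    (Icc_mem_nhds (by linarith) (by linarith))
    (.of_forall fun s => (contDiff_slice hF s).continuous.aestronglyMeasurable)
    ((contDiff_slice hF t).continuous.intervalIntegrable _ _)
    (contDiff_slice hF' t).continuous.aestronglyMeasurable
    (.of_forall fun x hx s hs => hC (x, s) ⟨uIoc_subset_uIcc hx, hs⟩)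
    intervalIntegrable_const
    (.of_forall fun x _ s _ => hasDerivAt_timeDeriv hF x s)).2

end PartialDerivatives

section IntervalInequalities

variable {a b : ℝ} {f f' f'' : ℝ → ℝ}

theorem integral_mul_deriv_deriv_eq_neg_integral_deriv_sq (hf : ∀ x, HasDerivAt f (f' x) x)
    (hf' : ∀ x, HasDerivAt f' (f'' x) x) (hc : Continuous f'')
    (ha : f a * f' a = 0) (hb : f b * f' b = 0) :
    ∫ x in a..b, f x * f'' x = -∫ x in a..b, f' x ^ 2 := by
  have hc' : Continuous f' := continuous_iff_continuousAt.2 fun x => (hf' x).continuousAt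
  rw [integral_mul_deriv_eq_deriv_mul (fun x _ => hf x) (fun x _ => hf' x)
    (hc'.intervalIntegrable _ _) (hc.intervalIntegrable _ _), ha, hb]
  simp [sq]

theorem integral_sq_le_integral_deriv_sq (hab : a ≤ b) (hf : ∀ x, HasDerivAt f (f' x) x)
    (hc : Continuous f') (ha : f a = 0) (hb : f b = 0) :
    ∫ x in a..b, f x ^ 2 ≤ (b - a) ^ 2 * ∫ x in a..b, f' x ^ 2 := by
  have hcf : Continuous f := continuous_iff_continuousAt.2 fun x => (hf x).continuousAt
  have hweight : ∫ x in a..b, ((a + b - 2 * x) * (2 * f x * f' x) - 2 * f x ^ 2) = 0 := by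
    rw [integral_eq_sub_of_hasDerivAt (f := fun x => (a + b - 2 * x) * f x ^ 2)
      (fun x _ => ((((hasDerivAt_id x).const_mul 2).const_sub (a + b)).mul
        ((hf x).pow 2)).congr_deriv (by simp; ring))
      (Continuous.intervalIntegrable (by fun_prop) _ _)]
    simp [ha, hb]
  calc ∫ x in a..b, f x ^ 2
      = ∫ x in a..b, (f x ^ 2 + ((a + b - 2 * x) * (2 * f x * f' x) - 2 * f x ^ 2)) := by
        rw [integral_add (Continuous.intervalIntegrable (by fun_prop) _ _)
          (Continuous.intervalIntegrable (by fun_prop) _ _), hweight, add_zero]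
    _ ≤ ∫ x in a..b, (b - a) ^ 2 * f' x ^ 2 := by
        refine integral_mono_on hab (Continuous.intervalIntegrable (by fun_prop) _ _)
          (Continuous.intervalIntegrable (by fun_prop) _ _) fun x hx => ?_
        have hw : (a + b - 2 * x) ^ 2 ≤ (b - a) ^ 2 :=
          sq_le_sq' (by linarith [hx.2]) (by linarith [hx.1])
        nlinarith [sq_nonneg (f x - (a + b - 2 * x) * f' x),
          mul_le_mul_of_nonneg_right hw (sq_nonneg (f' x))]
    _ = _ := intervalIntegral.integral_const_mul _ _

theorem integral_deriv_sq_le_integral_deriv_deriv_sq (hab : a < b)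
    (hf : ∀ x, HasDerivAt f (f' x) x) (hf' : ∀ x, HasDerivAt f' (f'' x) x)
    (hc : Continuous f'') (ha : f a = 0) (hb : f b = 0) :
    ∫ x in a..b, f' x ^ 2 ≤ (b - a) ^ 2 * ∫ x in a..b, f'' x ^ 2 := by
  have hcf : Continuous f := continuous_iff_continuousAt.2 fun x => (hf x).continuousAt
  have hcf' : Continuous f' := continuous_iff_continuousAt.2 fun x => (hf' x).continuousAt
  set L := (b - a) ^ 2
  have hLpos : 0 < L := pow_pos (sub_pos.2 hab) 2
  have hparts := integral_mul_deriv_deriv_eq_neg_integral_deriv_sq hf hf' hc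
    (by rw [ha, zero_mul]) (by rw [hb, zero_mul])
  have hyoung : ∫ x in a..b, (-2 * L) * (f x * f'' x) ≤
      ∫ x in a..b, (f x ^ 2 + L ^ 2 * f'' x ^ 2) :=
    integral_mono_on hab.le (Continuous.intervalIntegrable (by fun_prop) _ _)
      (Continuous.intervalIntegrable (by fun_prop) _ _)
      fun x _ => by nlinarith [sq_nonneg (f x + L * f'' x)]
  rw [integral_add (Continuous.intervalIntegrable (by fun_prop) _ _)
    (Continuous.intervalIntegrable (by fun_prop) _ _), intervalIntegral.integral_const_mul,
    intervalIntegral.integral_const_mul, hparts] at hyoung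
  have hpoincare := integral_sq_le_integral_deriv_sq hab.le hf hcf' ha hb
  refine le_of_mul_le_mul_left ?_ hLpos
  linarith

theorem sq_left_le_integral_sq_add_integral_deriv_sq (hab : a ≤ b)
    (hf : ∀ x, HasDerivAt f (f' x) x) (hc : Continuous f') :
    (b - a) * f a ^ 2 ≤ 2 * (∫ x in a..b, f x ^ 2) + (b - a) ^ 2 * ∫ x in a..b, f' x ^ 2 := by
  have hcf : Continuous f := continuous_iff_continuousAt.2 fun x => (hf x).continuousAt
  calc (b - a) * f a ^ 2 = ∫ x in a..b, (f x ^ 2 - (b - x) * (2 * f x * f' x)) := by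
        rw [integral_eq_sub_of_hasDerivAt (f := fun x => -((b - x) * f x ^ 2))
          (fun x _ => (((hasDerivAt_id x).const_sub b).mul
            ((hf x).pow 2)).neg.congr_deriv (by simp; ring))
          (Continuous.intervalIntegrable (by fun_prop) _ _)]
        ring
    _ ≤ ∫ x in a..b, (2 * f x ^ 2 + (b - a) ^ 2 * f' x ^ 2) := by
        refine integral_mono_on hab (Continuous.intervalIntegrable (by fun_prop) _ _)
          (Continuous.intervalIntegrable (by fun_prop) _ _) fun x hx => ?_
        have hw : (b - x) ^ 2 ≤ (b - a) ^ 2 :=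
          sq_le_sq' (by linarith [hx.1, hx.2]) (by linarith [hx.1])
        nlinarith [sq_nonneg (f x + (b - x) * f' x),
          mul_le_mul_of_nonneg_right hw (sq_nonneg (f' x))]
    _ = _ := by
        rw [integral_add (Continuous.intervalIntegrable (by fun_prop) _ _)
          (Continuous.intervalIntegrable (by fun_prop) _ _), intervalIntegral.integral_const_mul,
          intervalIntegral.integral_const_mul]

end IntervalInequalities

section HeatEquation

/-- `w` is a smooth solution, for nonnegative times, of the heat equation `wₜ = q wₓₓ` on `[0, 1]`
with homogeneous Dirichlet boundary conditions. -/
structure IsDirichletHeat (q : ℝ) (w : ℝ → ℝ → ℝ) : Prop where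
  contDiff : ContDiff ℝ ∞ (uncurry w)
  timeDeriv_eq : ∀ x ∈ Icc (0 : ℝ) 1, ∀ t, 0 ≤ t →
    timeDeriv w x t = q * spaceDeriv (spaceDeriv w) x t
  left_eq_zero : ∀ t, 0 ≤ t → w 0 t = 0
  right_eq_zero : ∀ t, 0 ≤ t → w 1 t = 0

/-- The squared `L²(0, 1)` norm of the spatial profile of `F` at time `t`. -/
noncomputable def energy (F : ℝ → ℝ → ℝ) (t : ℝ) : ℝ := ∫ x in (0 : ℝ)..1, F x t ^ 2

theorem hasDerivAt_energy {F : ℝ → ℝ → ℝ} (hF : ContDiff ℝ ∞ (uncurry F)) (t : ℝ) :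
    HasDerivAt (energy F) (∫ x in (0 : ℝ)..1, 2 * F x t * timeDeriv F x t) t := by
  have hsq : ContDiff ℝ ∞ (uncurry fun x t => F x t ^ 2) := hF.pow 2
  refine (hasDerivAt_integral_timeDeriv hsq 0 1 t).congr_deriv (integral_congr fun x _ => ?_)
  exact ((hasDerivAt_timeDeriv hF x t).fun_pow 2).deriv.trans (by simp)

theorem deriv_eq_of_eqOn {f g : ℝ → ℝ} {s : Set ℝ} {x : ℝ} (hs : UniqueDiffWithinAt ℝ s x)
    (hx : x ∈ s) (hfg : EqOn f g s) (hf : DifferentiableAt ℝ f x) (hg : DifferentiableAt ℝ g x) :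
    deriv f x = deriv g x :=
  hs.eq_deriv s hf.hasDerivAt.hasDerivWithinAt
    (hg.hasDerivAt.hasDerivWithinAt.congr hfg (hfg hx))

theorem timeDeriv_spaceDeriv_of_heat {q : ℝ} {F : ℝ → ℝ → ℝ} (hF : ContDiff ℝ ∞ (uncurry F))
    (hheat : ∀ x ∈ Icc (0 : ℝ) 1, ∀ t, 0 ≤ t →
      timeDeriv F x t = q * spaceDeriv (spaceDeriv F) x t) :
    ∀ x ∈ Icc (0 : ℝ) 1, ∀ t, 0 ≤ t →
      timeDeriv (spaceDeriv F) x t = q * spaceDeriv (spaceDeriv (spaceDeriv F)) x t := by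
  intro x hx t ht
  have hright := (hasDerivAt_spaceDeriv (contDiff_iterate_spaceDeriv hF 2) x t).const_mul q
  rw [timeDeriv_spaceDeriv hF]
  exact (deriv_eq_of_eqOn (uniqueDiffOn_Icc zero_lt_one x hx) hx (fun s hs => hheat s hs t ht)
    (hasDerivAt_spaceDeriv (contDiff_timeDeriv hF) x t).differentiableAt
    hright.differentiableAt).trans hright.deriv

namespace IsDirichletHeat

variable {q : ℝ} {w : ℝ → ℝ → ℝ}

theorem spaceDeriv_spaceDeriv_eq_zero (hq : q ≠ 0) (hw : IsDirichletHeat q w) {x : ℝ}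
    (hx : x ∈ Icc (0 : ℝ) 1) (hbdry : ∀ t, 0 ≤ t → w x t = 0) {t : ℝ} (ht : 0 ≤ t) :
    spaceDeriv (spaceDeriv w) x t = 0 := by
  have htime : timeDeriv w x t = 0 :=
    (deriv_eq_of_eqOn (uniqueDiffOn_Ici 0 t ht) ht hbdry
      (hasDerivAt_timeDeriv hw.contDiff x t).differentiableAt
      (differentiableAt_const 0)).trans (deriv_const t 0)
  rw [hw.timeDeriv_eq x hx t ht] at htime
  exact (mul_eq_zero.1 htime).resolve_left hq

theorem spaceDeriv_spaceDeriv (hq : q ≠ 0) (hw : IsDirichletHeat q w) :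
    IsDirichletHeat q (spaceDeriv (spaceDeriv w)) where
  contDiff := contDiff_iterate_spaceDeriv hw.contDiff 2
  timeDeriv_eq := timeDeriv_spaceDeriv_of_heat (contDiff_spaceDeriv hw.contDiff)
    (timeDeriv_spaceDeriv_of_heat hw.contDiff hw.timeDeriv_eq)
  left_eq_zero _ := hw.spaceDeriv_spaceDeriv_eq_zero hq (by simp) hw.left_eq_zero
  right_eq_zero _ := hw.spaceDeriv_spaceDeriv_eq_zero hq (by simp) hw.right_eq_zero

theorem energy_le_energy_spaceDeriv (hw : IsDirichletHeat q w) {t : ℝ} (ht : 0 ≤ t) :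
    energy w t ≤ energy (spaceDeriv w) t := by
  simpa [energy] using integral_sq_le_integral_deriv_sq zero_le_one
    (hasDerivAt_spaceDeriv hw.contDiff · t)
    (contDiff_slice (contDiff_spaceDeriv hw.contDiff) t).continuous
    (hw.left_eq_zero t ht) (hw.right_eq_zero t ht)

theorem energy_spaceDeriv_le_energy_spaceDeriv_spaceDeriv (hw : IsDirichletHeat q w) {t : ℝ}
    (ht : 0 ≤ t) : energy (spaceDeriv w) t ≤ energy (spaceDeriv (spaceDeriv w)) t := by
  simpa [energy] using integral_deriv_sq_le_integral_deriv_deriv_sq zero_lt_one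
    (hasDerivAt_spaceDeriv hw.contDiff · t)
    (hasDerivAt_spaceDeriv (contDiff_spaceDeriv hw.contDiff) · t)
    (contDiff_slice (contDiff_iterate_spaceDeriv hw.contDiff 2) t).continuous
    (hw.left_eq_zero t ht) (hw.right_eq_zero t ht)

end IsDirichletHeat

theorem deriv_energy_of_heat {q t : ℝ} {F : ℝ → ℝ → ℝ} (hF : ContDiff ℝ ∞ (uncurry F))
    (hheat : ∀ x ∈ Icc (0 : ℝ) 1, timeDeriv F x t = q * spaceDeriv (spaceDeriv F) x t)
    (h0 : F 0 t * spaceDeriv F 0 t = 0) (h1 : F 1 t * spaceDeriv F 1 t = 0) :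
    deriv (energy F) t = -(2 * q) * energy (spaceDeriv F) t := by
  have hF' := contDiff_spaceDeriv hF
  calc deriv (energy F) t = ∫ x in (0 : ℝ)..1, 2 * F x t * timeDeriv F x t :=
        (hasDerivAt_energy hF t).deriv
    _ = ∫ x in (0 : ℝ)..1, 2 * q * (F x t * spaceDeriv (spaceDeriv F) x t) := by
        refine integral_congr fun x hx => ?_
        rw [uIcc_of_le zero_le_one] at hx
        simp only [hheat x hx]
        ring
    _ = 2 * q * -energy (spaceDeriv F) t := by
        rw [intervalIntegral.integral_const_mul, energy,
          integral_mul_deriv_deriv_eq_neg_integral_deriv_sq (hasDerivAt_spaceDeriv hF · t)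
            (hasDerivAt_spaceDeriv hF' · t)
            (contDiff_slice (contDiff_spaceDeriv hF') t).continuous h0 h1]
    _ = _ := by ring

namespace IsDirichletHeat

variable {q : ℝ} {w : ℝ → ℝ → ℝ}

theorem deriv_energy_le (hq : 0 < q) (hw : IsDirichletHeat q w) {t : ℝ} (ht : 0 ≤ t) :
    deriv (energy w) t ≤ -(2 * q) * energy w t := by
  rw [deriv_energy_of_heat hw.contDiff (fun x hx => hw.timeDeriv_eq x hx t ht)
    (by rw [hw.left_eq_zero t ht, zero_mul]) (by rw [hw.right_eq_zero t ht, zero_mul])]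
  exact mul_le_mul_of_nonpos_left (hw.energy_le_energy_spaceDeriv ht) (by linarith)

theorem deriv_energy_spaceDeriv_le (hq : 0 < q) (hw : IsDirichletHeat q w) {t : ℝ} (ht : 0 ≤ t) :
    deriv (energy (spaceDeriv w)) t ≤ -(2 * q) * energy (spaceDeriv w) t := by
  have hw'' := hw.spaceDeriv_spaceDeriv hq.ne'
  rw [deriv_energy_of_heat (contDiff_spaceDeriv hw.contDiff)
    (fun x hx => timeDeriv_spaceDeriv_of_heat hw.contDiff hw.timeDeriv_eq x hx t ht)
    (by rw [hw''.left_eq_zero t ht, mul_zero]) (by rw [hw''.right_eq_zero t ht, mul_zero])]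
  exact mul_le_mul_of_nonpos_left
    (hw.energy_spaceDeriv_le_energy_spaceDeriv_spaceDeriv ht) (by linarith)

-- Even spatial derivatives of `w` are again Dirichlet solutions, which leaves orders `0` and `1`.
theorem deriv_energy_iterate_spaceDeriv_le (hq : 0 < q) (hw : IsDirichletHeat q w) (i : ℕ) {t : ℝ}
    (ht : 0 ≤ t) :
    deriv (energy (spaceDeriv^[i] w)) t ≤ -(2 * q) * energy (spaceDeriv^[i] w) t := by
  induction i using Nat.twoStepInduction generalizing w with
  | zero => exact hw.deriv_energy_le hq ht
  | one => exact hw.deriv_energy_spaceDeriv_le hq ht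
  | more _ ih _ => exact ih (hw.spaceDeriv_spaceDeriv hq.ne')

end IsDirichletHeat

end HeatEquation

section SobolevNorm

/-- The squared Sobolev norm of `f` in `H^N(0, 1)`. -/
noncomputable def sobolevSq (N : ℕ) (f : ℝ → ℝ) : ℝ :=
  ∑ i ∈ Finset.range (N + 1), ∫ x in (0 : ℝ)..1, iteratedDeriv i f x ^ 2

variable {N : ℕ} {f g : ℝ → ℝ}

theorem integral_iteratedDeriv_sq_nonneg (f : ℝ → ℝ) (i : ℕ) :
    0 ≤ ∫ x in (0 : ℝ)..1, iteratedDeriv i f x ^ 2 :=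
  integral_nonneg zero_le_one fun _ _ => sq_nonneg _

theorem sobolevSq_nonneg (N : ℕ) (f : ℝ → ℝ) : 0 ≤ sobolevSq N f :=
  Finset.sum_nonneg fun i _ => integral_iteratedDeriv_sq_nonneg f i

theorem sobolevSq_add_le (N : ℕ) (hf : ContDiff ℝ ∞ f) (hg : ContDiff ℝ ∞ g) :
    sobolevSq N (fun x => f x + g x) ≤ 2 * sobolevSq N f + 2 * sobolevSq N g := by
  simp only [sobolevSq, Finset.mul_sum, ← Finset.sum_add_distrib]
  refine Finset.sum_le_sum fun i _ => ?_
  have hi : (i : ℕ∞ω) ≤ ∞ := WithTop.coe_le_coe.2 le_top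
  have hadd : iteratedDeriv i (fun x => f x + g x) = iteratedDeriv i f + iteratedDeriv i g :=
    funext fun x => iteratedDeriv_fun_add (hf.of_le hi).contDiffAt (hg.of_le hi).contDiffAt
  simp only [hadd, Pi.add_apply]
  rw [← intervalIntegral.integral_const_mul, ← intervalIntegral.integral_const_mul,
    ← integral_add (Continuous.intervalIntegrable (by fun_prop) _ _)
      (Continuous.intervalIntegrable (by fun_prop) _ _)]
  exact integral_mono_on zero_le_one (Continuous.intervalIntegrable (by fun_prop) _ _)
    (Continuous.intervalIntegrable (by fun_prop) _ _) fun x _ => by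
      nlinarith [sq_nonneg (iteratedDeriv i f x - iteratedDeriv i g x)]

theorem deriv_zero_sq_le_sobolevSq (hN : 2 ≤ N) (hf : ContDiff ℝ ∞ f) :
    deriv f 0 ^ 2 ≤ 2 * sobolevSq N f := by
  have hderiv (i : ℕ) (x : ℝ) : HasDerivAt (iteratedDeriv i f) (iteratedDeriv (i + 1) f x) x := by
    rw [iteratedDeriv_succ]
    exact (hf.differentiable_iteratedDeriv i
      (WithTop.coe_lt_coe.2 (ENat.natCast_lt_top i)) x).hasDerivAt
  have htrace := sq_left_le_integral_sq_add_integral_deriv_sq zero_le_one (hderiv 1)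
    (hf.continuous_iteratedDeriv 2 (WithTop.coe_le_coe.2 le_top))
  have hsum : ∑ i ∈ ({1, 2} : Finset ℕ), ∫ x in (0 : ℝ)..1, iteratedDeriv i f x ^ 2 ≤
      sobolevSq N f :=
    Finset.sum_le_sum_of_subset_of_nonneg (by grind)
      fun i _ _ => integral_iteratedDeriv_sq_nonneg f i
  rw [Finset.sum_pair (by norm_num)] at hsum
  simp only [sub_zero, one_mul, one_pow, iteratedDeriv_one] at htrace hsum
  linarith [integral_iteratedDeriv_sq_nonneg f 2]

theorem sobolevSq_slice (N : ℕ) (F : ℝ → ℝ → ℝ) (t : ℝ) :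
    sobolevSq N (fun x => F x t) = ∑ i ∈ Finset.range (N + 1), energy (spaceDeriv^[i] F) t := by
  simp only [sobolevSq, energy, iterate_spaceDeriv_apply]

theorem differentiable_sobolevSq_slice (N : ℕ) {F : ℝ → ℝ → ℝ} (hF : ContDiff ℝ ∞ (uncurry F)) :
    Differentiable ℝ fun t => sobolevSq N fun x => F x t := by
  simp only [sobolevSq_slice]
  exact Differentiable.fun_sum fun i _ t =>
    (hasDerivAt_energy (contDiff_iterate_spaceDeriv hF i) t).differentiableAt

theorem IsDirichletHeat.deriv_sobolevSq_le {q : ℝ} {w : ℝ → ℝ → ℝ} (hq : 0 < q)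
    (hw : IsDirichletHeat q w) (N : ℕ) {t : ℝ} (ht : 0 ≤ t) :
    deriv (fun t => sobolevSq N fun x => w x t) t ≤ -(2 * q) * sobolevSq N fun x => w x t := by
  simp only [sobolevSq_slice, Finset.mul_sum]
  rw [deriv_fun_sum fun i _ =>
    (hasDerivAt_energy (contDiff_iterate_spaceDeriv hw.contDiff i) t).differentiableAt]
  exact Finset.sum_le_sum fun i _ => hw.deriv_energy_iterate_spaceDeriv_le hq i ht

end SobolevNorm

theorem le_mul_exp_of_deriv_le_s11 {L : ℝ → ℝ} {l : ℝ} (hL : Differentiable ℝ L)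
    (hderiv : ∀ t, 0 ≤ t → deriv L t ≤ -l * L t) {t : ℝ} (ht : 0 ≤ t) :
    L t ≤ L 0 * Real.exp (-l * t) := by
  have hgronwall := le_gronwallBound_of_liminf_deriv_right_le (f' := deriv L) (K := -l) (ε := 0)
    hL.continuous.continuousOn
    (fun x _ _ hr => (hL x).hasDerivAt.hasDerivWithinAt.liminf_right_slope_le hr) le_rfl
    (fun x hx => by simpa using hderiv x hx.1) t ⟨ht, le_rfl⟩
  rwa [gronwallBound_ε0, sub_zero] at hgronwall

section QuadraticForms

variable {ι : Type*} [Fintype ι]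

theorem exists_pos_mul_quadForm_le (P : Matrix ι ι ℝ) {Q : Matrix ι ι ℝ} (hQ : Q.PosDef) :
    ∃ c > 0, ∀ v : ι → ℝ, c * (v ⬝ᵥ P *ᵥ v) ≤ v ⬝ᵥ Q *ᵥ v := by
  have hcont (M : Matrix ι ι ℝ) : Continuous fun v : ι → ℝ => v ⬝ᵥ M *ᵥ v := by fun_prop
  have hcompact : IsCompact (Metric.sphere (0 : ι → ℝ) 1) := isCompact_sphere 0 1
  obtain ⟨C, hC⟩ := hcompact.exists_bound_of_continuousOn (hcont P).continuousOn
  obtain ⟨δ, hδ, hQδ⟩ := hcompact.exists_forall_le' (hcont Q).continuousOn (a := 0) fun v hv =>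
    hQ.dotProduct_mulVec_pos (ne_zero_of_mem_unit_sphere ⟨v, hv⟩)
  have hunit (v : ι → ℝ) (hv : v ∈ Metric.sphere 0 1) :
      δ / (|C| + 1) * (v ⬝ᵥ P *ᵥ v) ≤ v ⬝ᵥ Q *ᵥ v := by
    have hPv : v ⬝ᵥ P *ᵥ v ≤ |C| + 1 := by
      linarith [le_abs_self (v ⬝ᵥ P *ᵥ v), hC v hv, le_abs_self C,
        Real.norm_eq_abs (v ⬝ᵥ P *ᵥ v)]
    calc δ / (|C| + 1) * (v ⬝ᵥ P *ᵥ v) ≤ δ / (|C| + 1) * (|C| + 1) := by gcongr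
      _ = δ := div_mul_cancel₀ _ (by positivity)
      _ ≤ v ⬝ᵥ Q *ᵥ v := hQδ v hv
  refine ⟨δ / (|C| + 1), by positivity, fun v => ?_⟩
  rcases eq_or_ne v 0 with rfl | hv
  · simp
  · have hscale (M : Matrix ι ι ℝ) :
        v ⬝ᵥ M *ᵥ v = ‖v‖ ^ 2 * ((‖v‖⁻¹ • v) ⬝ᵥ M *ᵥ (‖v‖⁻¹ • v)) := by
      have := norm_ne_zero_iff.2 hv
      simp only [Matrix.mulVec_smul, smul_dotProduct, dotProduct_smul, smul_eq_mul]
      field_simp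
    rw [hscale P, hscale Q, mul_left_comm]
    exact mul_le_mul_of_nonneg_left (hunit _ (by simp [norm_smul, hv])) (sq_nonneg _)

theorem dotProduct_mulVec_comm {P : Matrix ι ι ℝ} (hP : P.IsHermitian) (v w : ι → ℝ) :
    v ⬝ᵥ P *ᵥ w = w ⬝ᵥ P *ᵥ v := by
  rw [Matrix.dotProduct_mulVec, dotProduct_comm, ← Matrix.mulVec_transpose,
    ← Matrix.conjTranspose_eq_transpose_of_trivial, hP.eq]

theorem neg_two_mul_dotProduct_mulVec_le {P : Matrix ι ι ℝ} (hP : P.PosSemidef) (v w : ι → ℝ)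
    {ε : ℝ} (hε : 0 < ε) :
    -(2 * (v ⬝ᵥ P *ᵥ w)) ≤ ε * (v ⬝ᵥ P *ᵥ v) + ε⁻¹ * (w ⬝ᵥ P *ᵥ w) := by
  have hnonneg : 0 ≤ ε⁻¹ * ((ε • v + w) ⬝ᵥ P *ᵥ (ε • v + w)) :=
    mul_nonneg (inv_nonneg.2 hε.le) (by simpa using hP.dotProduct_mulVec_nonneg (ε • v + w))
  simp only [Matrix.mulVec_add, Matrix.mulVec_smul, add_dotProduct, dotProduct_add,
    smul_dotProduct, dotProduct_smul, smul_eq_mul, dotProduct_mulVec_comm hP.isHermitian w v]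
    at hnonneg
  field_simp at hnonneg ⊢
  linarith

theorem lyapunov_form_le {A P Q : Matrix ι ι ℝ} (hP : P.PosSemidef) (hLyap : P * A + Aᵀ * P = -Q)
    {μ : ℝ} (hμ : 0 < μ) {v : ι → ℝ} (hPQ : μ * (v ⬝ᵥ P *ᵥ v) ≤ v ⬝ᵥ Q *ᵥ v) (b : ι → ℝ) (g : ℝ) :
    (A *ᵥ v - g • b) ⬝ᵥ P *ᵥ v + v ⬝ᵥ P *ᵥ (A *ᵥ v - g • b) ≤
      -(μ / 2) * (v ⬝ᵥ P *ᵥ v) + 2 / μ * (b ⬝ᵥ P *ᵥ b) * g ^ 2 := by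
  have hQform : v ⬝ᵥ Q *ᵥ v = -(2 * (v ⬝ᵥ P *ᵥ (A *ᵥ v))) := by
    have htranspose : v ⬝ᵥ (Aᵀ * P) *ᵥ v = v ⬝ᵥ P *ᵥ (A *ᵥ v) := by
      rw [← Matrix.mulVec_mulVec, Matrix.dotProduct_mulVec v, Matrix.vecMul_transpose,
        dotProduct_mulVec_comm hP.isHermitian]
    rw [← neg_neg Q, ← hLyap, Matrix.neg_mulVec, dotProduct_neg, Matrix.add_mulVec,
      dotProduct_add, htranspose, ← Matrix.mulVec_mulVec]
    ring
  have hyoung := neg_two_mul_dotProduct_mulVec_le hP v (g • b) (half_pos hμ)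
  rw [dotProduct_mulVec_comm hP.isHermitian (A *ᵥ v - g • b)]
  simp only [Matrix.mulVec_sub, dotProduct_sub, Matrix.mulVec_smul, smul_dotProduct,
    dotProduct_smul, smul_eq_mul, inv_div] at hyoung ⊢
  linarith

end QuadraticForms

section DotProductCalculus

variable {ι : Type*} [Fintype ι]

theorem contDiff_dotProduct {E : Type*} [NormedAddCommGroup E] [NormedSpace ℝ E]
    {f g : E → ι → ℝ} {r : ℕ∞ω} (hf : ContDiff ℝ r f) (hg : ContDiff ℝ r g) :
    ContDiff ℝ r fun x => f x ⬝ᵥ g x :=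
  ContDiff.sum fun i _ => (contDiff_pi.1 hf i).mul (contDiff_pi.1 hg i)

theorem hasDerivAt_dotProduct {f g : ℝ → ι → ℝ} {f' g' : ι → ℝ} {x : ℝ}
    (hf : HasDerivAt f f' x) (hg : HasDerivAt g g' x) :
    HasDerivAt (fun x => f x ⬝ᵥ g x) (f' ⬝ᵥ g x + f x ⬝ᵥ g') x := by
  simp only [dotProduct, ← Finset.sum_add_distrib]
  exact HasDerivAt.fun_sum fun i _ => (hasDerivAt_pi.1 hf i).mul (hasDerivAt_pi.1 hg i)

theorem hasDerivAt_dotProduct_const {f : ℝ → ι → ℝ} {f' : ι → ℝ} {x : ℝ}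
    (hf : HasDerivAt f f' x) (v : ι → ℝ) : HasDerivAt (fun x => f x ⬝ᵥ v) (f' ⬝ᵥ v) x := by
  simpa using hasDerivAt_dotProduct hf (hasDerivAt_const x v)

theorem hasDerivAt_const_dotProduct {f : ℝ → ι → ℝ} {f' : ι → ℝ} {x : ℝ}
    (hf : HasDerivAt f f' x) (v : ι → ℝ) : HasDerivAt (fun x => v ⬝ᵥ f x) (v ⬝ᵥ f') x := by
  simpa using hasDerivAt_dotProduct (hasDerivAt_const x v) hf

theorem hasDerivAt_mulVec (P : Matrix ι ι ℝ) {f : ℝ → ι → ℝ} {f' : ι → ℝ} {x : ℝ}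
    (hf : HasDerivAt f f' x) : HasDerivAt (fun x => P *ᵥ f x) (P *ᵥ f') x :=
  hasDerivAt_pi.2 fun i => hasDerivAt_const_dotProduct hf (P i)

theorem iteratedDeriv_dotProduct_const {k : ℝ → ι → ℝ} (hk : ContDiff ℝ ∞ k) (v : ι → ℝ) (i : ℕ) :
    iteratedDeriv i (fun x => k x ⬝ᵥ v) = fun x => iteratedDeriv i k x ⬝ᵥ v := by
  induction i with
  | zero => simp
  | succ i ih =>
    funext x
    rw [iteratedDeriv_succ, iteratedDeriv_succ, ih]
    exact (hasDerivAt_dotProduct_const (hk.differentiable_iteratedDeriv i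
      (WithTop.coe_lt_coe.2 (ENat.natCast_lt_top i)) x).hasDerivAt v).deriv

theorem dotProduct_self_nonneg (v : ι → ℝ) : 0 ≤ v ⬝ᵥ v := by
  simpa using dotProduct_star_self_nonneg v

theorem dotProduct_sq_le (v w : ι → ℝ) : (v ⬝ᵥ w) ^ 2 ≤ (v ⬝ᵥ v) * (w ⬝ᵥ w) := by
  simpa [dotProduct, sq] using Finset.sum_mul_sq_le_sq_mul_sq Finset.univ v w

theorem exists_sobolevSq_dotProduct_le (N : ℕ) {k : ℝ → ι → ℝ} (hk : ContDiff ℝ ∞ k) :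
    ∃ M ≥ 0, ∀ v, sobolevSq N (fun x => k x ⬝ᵥ v) ≤ M * (v ⬝ᵥ v) := by
  refine ⟨∑ i ∈ Finset.range (N + 1),
    ∫ x in (0 : ℝ)..1, iteratedDeriv i k x ⬝ᵥ iteratedDeriv i k x,
    Finset.sum_nonneg fun i _ => integral_nonneg zero_le_one
      fun x _ => dotProduct_self_nonneg _, fun v => ?_⟩
  rw [sobolevSq, Finset.sum_mul]
  refine Finset.sum_le_sum fun i _ => ?_
  have hc := hk.continuous_iteratedDeriv i (WithTop.coe_le_coe.2 le_top)
  rw [iteratedDeriv_dotProduct_const hk, ← intervalIntegral.integral_mul_const]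
  exact integral_mono_on zero_le_one (Continuous.intervalIntegrable (by fun_prop) _ _)
    (Continuous.intervalIntegrable (by fun_prop) _ _) fun x _ => dotProduct_sq_le _ _

theorem exists_sobolevSq_add_dotProduct_le (N : ℕ) {k : ℝ → ι → ℝ} (hk : ContDiff ℝ ∞ k) :
    ∃ C > 0, ∀ f : ℝ → ℝ, ContDiff ℝ ∞ f → ∀ v,
      sobolevSq N (fun x => f x + k x ⬝ᵥ v) + v ⬝ᵥ v ≤ C * (sobolevSq N f + v ⬝ᵥ v) := by
  obtain ⟨M, hM, hle⟩ := exists_sobolevSq_dotProduct_le N hk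
  refine ⟨2 + 2 * M, by positivity, fun f hf v => ?_⟩
  have hadd := sobolevSq_add_le N hf (contDiff_dotProduct hk contDiff_const (g := fun _ => v))
  have hf0 := mul_nonneg hM (sobolevSq_nonneg N f)
  linarith [hle v, dotProduct_self_nonneg v]

end DotProductCalculus

section Cascade

variable {ι : Type*} [Fintype ι] {N : ℕ} {q : ℝ} {A P Q : Matrix ι ι ℝ} {b : ι → ℝ}
  {w : ℝ → ℝ → ℝ} {V : ℝ → ι → ℝ}

/-- The Lyapunov functional `VᵀPV + R ‖w‖²_{H^N}` of a heat equation for `w` driving an ordinary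
differential equation for `V`. -/
noncomputable def cascadeLyapunov (N : ℕ) (P : Matrix ι ι ℝ) (R : ℝ) (w : ℝ → ℝ → ℝ)
    (V : ℝ → ι → ℝ) (t : ℝ) : ℝ :=
  V t ⬝ᵥ P *ᵥ V t + R * sobolevSq N fun x => w x t

theorem hasDerivAt_cascadeLyapunov (N : ℕ) (P : Matrix ι ι ℝ) (R : ℝ)
    (hw : ContDiff ℝ ∞ (uncurry w)) (hV : Differentiable ℝ V) (t : ℝ) :
    HasDerivAt (cascadeLyapunov N P R w V)
      (deriv V t ⬝ᵥ P *ᵥ V t + V t ⬝ᵥ P *ᵥ deriv V t +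
        R * deriv (fun t => sobolevSq N fun x => w x t) t) t :=
  (hasDerivAt_dotProduct (hV t).hasDerivAt (hasDerivAt_mulVec P (hV t).hasDerivAt)).add
    ((differentiable_sobolevSq_slice N hw t).hasDerivAt.const_mul R)

theorem deriv_cascadeLyapunov_le (hN : 2 ≤ N) (hq : 0 < q) (hP : P.PosSemidef)
    (hLyap : P * A + Aᵀ * P = -Q) {μ R : ℝ} (hμ : 0 < μ)
    (hPQ : ∀ v, μ * (v ⬝ᵥ P *ᵥ v) ≤ v ⬝ᵥ Q *ᵥ v) (hR : 4 / μ * (b ⬝ᵥ P *ᵥ b) ≤ q * R)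
    (hw : IsDirichletHeat q w) (hV : Differentiable ℝ V)
    (hode : ∀ t, 0 ≤ t → deriv V t = A *ᵥ V t - spaceDeriv w 0 t • b) {t : ℝ} (ht : 0 ≤ t) :
    deriv (cascadeLyapunov N P R w V) t ≤ -min (μ / 2) q * cascadeLyapunov N P R w V t := by
  have hPnonneg (v : ι → ℝ) : 0 ≤ v ⬝ᵥ P *ᵥ v := by simpa using hP.dotProduct_mulVec_nonneg v
  have hRnonneg : 0 ≤ R := by
    have := hPnonneg b
    exact nonneg_of_mul_nonneg_right (hR.trans' (by positivity)) hq
  have hdiss := lyapunov_form_le hP hLyap hμ (hPQ (V t)) b (spaceDeriv w 0 t)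
  have hheat := mul_le_mul_of_nonneg_left (hw.deriv_sobolevSq_le hq N ht) hRnonneg
  have htrace : 2 / μ * (b ⬝ᵥ P *ᵥ b) * spaceDeriv w 0 t ^ 2 ≤
      q * R * sobolevSq N fun x => w x t := by
    have hK : 0 ≤ 2 / μ * (b ⬝ᵥ P *ᵥ b) := by have := hPnonneg b; positivity
    calc 2 / μ * (b ⬝ᵥ P *ᵥ b) * spaceDeriv w 0 t ^ 2
        ≤ 2 / μ * (b ⬝ᵥ P *ᵥ b) * (2 * sobolevSq N fun x => w x t) :=
          mul_le_mul_of_nonneg_left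
            (deriv_zero_sq_le_sobolevSq hN (contDiff_slice hw.contDiff t)) hK
      _ = 4 / μ * (b ⬝ᵥ P *ᵥ b) * sobolevSq N fun x => w x t := by ring
      _ ≤ _ := mul_le_mul_of_nonneg_right hR (sobolevSq_nonneg _ _)
  have hrateV := mul_le_mul_of_nonneg_right (min_le_left (μ / 2) q) (hPnonneg (V t))
  have hratew := mul_le_mul_of_nonneg_right (min_le_right (μ / 2) q)
    (mul_nonneg hRnonneg (sobolevSq_nonneg N fun x => w x t))
  rw [(hasDerivAt_cascadeLyapunov N P R hw.contDiff hV t).deriv, hode t ht, cascadeLyapunov]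
  linarith

theorem exists_equiv_cascadeLyapunov (N : ℕ) (hP : P.PosDef) {R : ℝ} (hR : 0 < R) :
    ∃ a > 0, ∃ c > 0, ∀ (w : ℝ → ℝ → ℝ) (V : ℝ → ι → ℝ) (t : ℝ),
      a * (sobolevSq N (fun x => w x t) + V t ⬝ᵥ V t) ≤ cascadeLyapunov N P R w V t ∧
      cascadeLyapunov N P R w V t ≤ c * (sobolevSq N (fun x => w x t) + V t ⬝ᵥ V t) := by
  classical
  obtain ⟨a, ha, hlower⟩ := exists_pos_mul_quadForm_le 1 hP
  obtain ⟨c, hc, hupper⟩ := exists_pos_mul_quadForm_le P (Q := 1) .one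
  simp only [Matrix.one_mulVec] at hlower hupper
  refine ⟨min a R, lt_min ha hR, max c⁻¹ R, lt_max_of_lt_right hR, fun w V t => ⟨?_, ?_⟩⟩
  · have hVa := mul_le_mul_of_nonneg_right (min_le_left a R) (dotProduct_self_nonneg (V t))
    have hwR := mul_le_mul_of_nonneg_right (min_le_right a R)
      (sobolevSq_nonneg N fun x => w x t)
    rw [cascadeLyapunov]
    linarith [hlower (V t)]
  · have hVc := mul_le_mul_of_nonneg_right (le_max_left c⁻¹ R) (dotProduct_self_nonneg (V t))
    have hwR := mul_le_mul_of_nonneg_right (le_max_right c⁻¹ R)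
      (sobolevSq_nonneg N fun x => w x t)
    rw [cascadeLyapunov]
    linarith [(le_inv_mul_iff₀ hc).2 (hupper (V t))]

theorem exists_exp_decay_of_cascade (hN : 2 ≤ N) (hq : 0 < q) (hP : P.PosDef) (hQ : Q.PosDef)
    (hLyap : P * A + Aᵀ * P = -Q) (b : ι → ℝ) :
    ∃ κ > 0, ∃ l > 0, ∀ (w : ℝ → ℝ → ℝ) (V : ℝ → ι → ℝ), IsDirichletHeat q w →
      Differentiable ℝ V →
      (∀ t, 0 ≤ t → deriv V t = A *ᵥ V t - spaceDeriv w 0 t • b) → ∀ t, 0 ≤ t →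
      sobolevSq N (fun x => w x t) + V t ⬝ᵥ V t ≤
        κ * (sobolevSq N (fun x => w x 0) + V 0 ⬝ᵥ V 0) * Real.exp (-l * t) := by
  obtain ⟨μ, hμ, hPQ⟩ := exists_pos_mul_quadForm_le P hQ
  obtain ⟨R, hRpos, hR⟩ : ∃ R > 0, 4 / μ * (b ⬝ᵥ P *ᵥ b) ≤ q * R :=
    ⟨max 1 (4 / μ * (b ⬝ᵥ P *ᵥ b) / q), by positivity, by
      rw [← div_le_iff₀' hq]; exact le_max_right _ _⟩
  obtain ⟨a, ha, c, hc, hequiv⟩ := exists_equiv_cascadeLyapunov N hP hRpos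
  refine ⟨a⁻¹ * c, by positivity, min (μ / 2) q, by positivity, fun w V hw hV hode t ht => ?_⟩
  have hdecay := le_mul_exp_of_deriv_le_s11
    (fun s => (hasDerivAt_cascadeLyapunov N P R hw.contDiff hV s).differentiableAt)
    (fun s hs => deriv_cascadeLyapunov_le hN hq hP.posSemidef hLyap hμ hPQ hR hw hV hode hs) ht
  rw [mul_assoc, mul_assoc, ← mul_assoc c, le_inv_mul_iff₀ ha]
  calc a * (sobolevSq N (fun x => w x t) + V t ⬝ᵥ V t)
      ≤ cascadeLyapunov N P R w V t := (hequiv w V t).1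
    _ ≤ cascadeLyapunov N P R w V 0 * Real.exp (-min (μ / 2) q * t) := hdecay
    _ ≤ _ := mul_le_mul_of_nonneg_right (hequiv w V 0).2 (Real.exp_nonneg _)

end Cascade

section ErrorSystem

variable {ι : Type*} [Fintype ι] {N : ℕ} {q : ℝ} {B : Matrix ι ι ℝ} {b : ι → ℝ}
  {k : ℝ → ι → ℝ} {u : ℝ → ℝ → ℝ} {V : ℝ → ι → ℝ}

/-- `(u, V)` is a smooth solution, for nonnegative times, of the observer error system with its two
finite-dimensional states stacked into the single vector `V`. With `V = (Z̃, X̃)`, `b = (P₂, P₀)`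
and `k = (ϑ, θ)`, the gain is `p₁ = -k · b`, and both boundary conditions take the form
`u = -k · V` because `k 0 = (0, -C_X)` and `k 1 = (-C_z, 0)`. -/
structure IsErrorSolution (q : ℝ) (B : Matrix ι ι ℝ) (b : ι → ℝ) (k : ℝ → ι → ℝ)
    (u : ℝ → ℝ → ℝ) (V : ℝ → ι → ℝ) : Prop where
  contDiff_u : ContDiff ℝ ∞ (uncurry u)
  contDiff_V : ContDiff ℝ ∞ V
  deriv_V : ∀ t, 0 ≤ t → deriv V t = B *ᵥ V t - spaceDeriv u 0 t • b
  timeDeriv_u : ∀ x ∈ Icc (0 : ℝ) 1, ∀ t, 0 ≤ t →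
    timeDeriv u x t = q * spaceDeriv (spaceDeriv u) x t + (k x ⬝ᵥ b) * spaceDeriv u 0 t
  left_eq : ∀ t, 0 ≤ t → u 0 t = -(k 0 ⬝ᵥ V t)
  right_eq : ∀ t, 0 ≤ t → u 1 t = -(k 1 ⬝ᵥ V t)

/-- The change of variables `w(x, t) = u(x, t) + k(x) · V(t)`, which turns the observer error system
into a Dirichlet heat equation for `w` driving an ordinary differential equation for `V`. -/
def decoupled (k : ℝ → ι → ℝ) (u : ℝ → ℝ → ℝ) (V : ℝ → ι → ℝ) (x t : ℝ) : ℝ :=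
  u x t + k x ⬝ᵥ V t

theorem contDiff_decoupled (hk : ContDiff ℝ ∞ k) (hu : ContDiff ℝ ∞ (uncurry u))
    (hV : ContDiff ℝ ∞ V) : ContDiff ℝ ∞ (uncurry (decoupled k u V)) :=
  hu.add (contDiff_dotProduct (hk.comp contDiff_fst) (hV.comp contDiff_snd))

theorem spaceDeriv_decoupled (hk : Differentiable ℝ k) (hu : ContDiff ℝ ∞ (uncurry u))
    (V : ℝ → ι → ℝ) :
    spaceDeriv (decoupled k u V) = decoupled (deriv k) (spaceDeriv u) V :=
  funext fun x => funext fun t => ((hasDerivAt_spaceDeriv hu x t).add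
    (hasDerivAt_dotProduct_const (hk x).hasDerivAt (V t))).deriv

theorem timeDeriv_decoupled (k : ℝ → ι → ℝ) (hu : ContDiff ℝ ∞ (uncurry u))
    (hV : Differentiable ℝ V) :
    timeDeriv (decoupled k u V) = decoupled k (timeDeriv u) (deriv V) :=
  funext fun x => funext fun t => ((hasDerivAt_timeDeriv hu x t).add
    (hasDerivAt_const_dotProduct (hV t).hasDerivAt (k x))).deriv

namespace IsErrorSolution

theorem isDirichletHeat_decoupled (h : IsErrorSolution q B b k u V) (hk : ContDiff ℝ ∞ k)
    (hkode : ∀ x, q • deriv (deriv k) x = k x ᵥ* B) : IsDirichletHeat q (decoupled k u V) where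
  contDiff := contDiff_decoupled hk h.contDiff_u h.contDiff_V
  timeDeriv_eq x hx t ht := by
    have hk' : ContDiff ℝ ∞ (deriv k) := (contDiff_infty_iff_deriv.1 hk).2
    have hkernel : q * (deriv (deriv k) x ⬝ᵥ V t) = k x ⬝ᵥ B *ᵥ V t := by
      rw [Matrix.dotProduct_mulVec, ← hkode, smul_dotProduct, smul_eq_mul]
    rw [timeDeriv_decoupled k h.contDiff_u (h.contDiff_V.differentiable (by simp)),
      spaceDeriv_decoupled (hk.differentiable (by simp)) h.contDiff_u,
      spaceDeriv_decoupled (hk'.differentiable (by simp)) (contDiff_spaceDeriv h.contDiff_u)]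
    simp only [decoupled, h.timeDeriv_u x hx t ht, h.deriv_V t ht, dotProduct_sub,
      dotProduct_smul, smul_eq_mul, mul_add, hkernel]
    ring
  left_eq_zero t ht := by simp [decoupled, h.left_eq t ht]
  right_eq_zero t ht := by simp [decoupled, h.right_eq t ht]

theorem deriv_V_eq_decoupled (h : IsErrorSolution q B b k u V) (hk : Differentiable ℝ k)
    {t : ℝ} (ht : 0 ≤ t) :
    deriv V t = (B + Matrix.vecMulVec b (deriv k 0)) *ᵥ V t -
      spaceDeriv (decoupled k u V) 0 t • b := by
  rw [h.deriv_V t ht, spaceDeriv_decoupled hk h.contDiff_u, Matrix.add_mulVec,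
    Matrix.vecMulVec_mulVec, op_smul_eq_smul, decoupled]
  module

end IsErrorSolution

theorem exists_exp_decay_of_isErrorSolution (hN : 2 ≤ N) (hq : 0 < q) (hk : ContDiff ℝ ∞ k)
    (hkode : ∀ x, q • deriv (deriv k) x = k x ᵥ* B) {P Q : Matrix ι ι ℝ} (hP : P.PosDef)
    (hQ : Q.PosDef) (hLyap : P * (B + Matrix.vecMulVec b (deriv k 0)) +
      (B + Matrix.vecMulVec b (deriv k 0))ᵀ * P = -Q) :
    ∃ κ > 0, ∃ l > 0, ∀ (u : ℝ → ℝ → ℝ) (V : ℝ → ι → ℝ), IsErrorSolution q B b k u V →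
      ∀ t, 0 ≤ t → sobolevSq N (fun x => u x t) + V t ⬝ᵥ V t ≤
        κ * (sobolevSq N (fun x => u x 0) + V 0 ⬝ᵥ V 0) * Real.exp (-l * t) := by
  obtain ⟨κ, hκ, l, hl, hdecay⟩ := exists_exp_decay_of_cascade hN hq hP hQ hLyap b
  obtain ⟨C, hC, hequiv⟩ := exists_sobolevSq_add_dotProduct_le N hk
  refine ⟨C * κ * C, by positivity, l, hl, fun u V h t ht => ?_⟩
  have hw := h.isDirichletHeat_decoupled hk hkode
  have hback : sobolevSq N (fun x => u x t) + V t ⬝ᵥ V t ≤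
      C * (sobolevSq N (fun x => decoupled k u V x t) + V t ⬝ᵥ V t) := by
    simpa [decoupled] using hequiv _ (contDiff_slice hw.contDiff t) (-V t)
  calc sobolevSq N (fun x => u x t) + V t ⬝ᵥ V t
      ≤ C * (sobolevSq N (fun x => decoupled k u V x t) + V t ⬝ᵥ V t) := hback
    _ ≤ C * (κ * (sobolevSq N (fun x => decoupled k u V x 0) + V 0 ⬝ᵥ V 0) *
          Real.exp (-l * t)) := by
        gcongr
        exact hdecay _ V hw (h.contDiff_V.differentiable (by simp))
          (fun s hs => h.deriv_V_eq_decoupled (hk.differentiable (by simp)) hs) t ht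
    _ ≤ C * (κ * (C * (sobolevSq N (fun x => u x 0) + V 0 ⬝ᵥ V 0)) * Real.exp (-l * t)) := by
        gcongr
        exact hequiv _ (contDiff_slice h.contDiff_u 0) (V 0)
    _ = _ := by ring

theorem sqrt_le_mul_sqrt_mul_exp {x y κ l t : ℝ} (hκ : 0 ≤ κ) (h : x ≤ κ * y * Real.exp (-l * t)) :
    √x ≤ √κ * √y * Real.exp (-(l / 2) * t) := by
  have hexp : √(Real.exp (-l * t)) = Real.exp (-(l / 2) * t) := by
    rw [← Real.exp_half]
    ring_nf
  calc √x ≤ √(κ * y * Real.exp (-l * t)) := Real.sqrt_le_sqrt h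
    _ = √κ * √y * Real.exp (-(l / 2) * t) := by
      rw [Real.sqrt_mul' _ (Real.exp_nonneg _), Real.sqrt_mul hκ, hexp]

end ErrorSystem

section Stacking

variable {α β : Type*}

theorem contDiff_sumElim [Fintype α] [Fintype β] {f : ℝ → α → ℝ} {g : ℝ → β → ℝ} {r : ℕ∞ω}
    (hf : ContDiff ℝ r f) (hg : ContDiff ℝ r g) : ContDiff ℝ r fun x => Sum.elim (f x) (g x) :=
  contDiff_pi.2 (Sum.rec (contDiff_pi.1 hf) (contDiff_pi.1 hg))

theorem deriv_sumElim [Finite α] [Finite β] {f : ℝ → α → ℝ} {g : ℝ → β → ℝ}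
    (hf : Differentiable ℝ f) (hg : Differentiable ℝ g) :
    deriv (fun x => Sum.elim (f x) (g x)) = fun x => Sum.elim (deriv f x) (deriv g x) := by
  have := Fintype.ofFinite α
  have := Fintype.ofFinite β
  exact funext fun x => (hasDerivAt_pi.2 (Sum.rec (hasDerivAt_pi.1 (hf x).hasDerivAt)
    (hasDerivAt_pi.1 (hg x).hasDerivAt))).deriv

variable [Fintype α] [Fintype β]

theorem smul_deriv_deriv_sumElim {q : ℝ} {f : ℝ → α → ℝ} {g : ℝ → β → ℝ} {A : Matrix α α ℝ}
    {B : Matrix β β ℝ} (hf : ContDiff ℝ ∞ f) (hg : ContDiff ℝ ∞ g)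
    (hfode : ∀ x, q • deriv (deriv f) x = f x ᵥ* A)
    (hgode : ∀ x, q • deriv (deriv g) x = g x ᵥ* B) (x : ℝ) :
    q • deriv (deriv fun x => Sum.elim (f x) (g x)) x =
      Sum.elim (f x) (g x) ᵥ* Matrix.fromBlocks A 0 0 B := by
  obtain ⟨hfdiff, hf'⟩ := contDiff_infty_iff_deriv.1 hf
  obtain ⟨hgdiff, hg'⟩ := contDiff_infty_iff_deriv.1 hg
  rw [deriv_sumElim hfdiff hgdiff,
    deriv_sumElim (hf'.differentiable (by simp)) (hg'.differentiable (by simp)),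
    Matrix.vecMul_fromBlocks]
  simp [← hfode, ← hgode, funext_iff]

theorem fromBlocks_diagonal_mulVec_sumElim_sub_smul (A : Matrix α α ℝ) (B : Matrix β β ℝ)
    (z c : α → ℝ) (x d : β → ℝ) (g : ℝ) :
    Matrix.fromBlocks A 0 0 B *ᵥ Sum.elim z x - g • Sum.elim c d =
      Sum.elim (A *ᵥ z - g • c) (B *ᵥ x - g • d) := by
  simp [Matrix.fromBlocks_mulVec, funext_iff]

theorem isErrorSolution_sumElim {q : ℝ} {A : Matrix α α ℝ} {Az : Matrix β β ℝ} {CX P₀ : α → ℝ}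
    {Cz P₂ : β → ℝ} {θ : ℝ → α → ℝ} {ϑ : ℝ → β → ℝ} {p₁ : ℝ → ℝ} {u : ℝ → ℝ → ℝ} {X : ℝ → α → ℝ}
    {Z : ℝ → β → ℝ} (hϑ0 : ϑ 0 = 0) (hϑ1 : ϑ 1 = -Cz) (hθ0 : θ 0 = -CX) (hθ1 : θ 1 = 0)
    (hp₁ : ∀ x, p₁ x = -(ϑ x ⬝ᵥ P₂) - θ x ⬝ᵥ P₀) (hu : ContDiff ℝ ∞ (uncurry u))
    (hX : ContDiff ℝ ∞ X) (hZ : ContDiff ℝ ∞ Z)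
    (hXode : ∀ t, 0 ≤ t → deriv X t = A *ᵥ X t - deriv (fun s => u s t) 0 • P₀)
    (hpde : ∀ x ∈ Icc (0 : ℝ) 1, ∀ t, 0 ≤ t → deriv (fun s => u x s) t =
      q * iteratedDeriv 2 (fun s => u s t) x - p₁ x * deriv (fun s => u s t) 0)
    (hleft : ∀ t, 0 ≤ t → u 0 t = CX ⬝ᵥ X t) (hright : ∀ t, 0 ≤ t → u 1 t = Cz ⬝ᵥ Z t)
    (hZode : ∀ t, 0 ≤ t → deriv Z t = Az *ᵥ Z t - deriv (fun s => u s t) 0 • P₂) :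
    IsErrorSolution q (Matrix.fromBlocks Az 0 0 A) (Sum.elim P₂ P₀)
      (fun x => Sum.elim (ϑ x) (θ x)) u fun t => Sum.elim (Z t) (X t) where
  contDiff_u := hu
  contDiff_V := contDiff_sumElim hZ hX
  deriv_V t ht := by
    rw [deriv_sumElim (hZ.differentiable (by simp)) (hX.differentiable (by simp)),
      fromBlocks_diagonal_mulVec_sumElim_sub_smul]
    exact congrArg₂ Sum.elim (hZode t ht) (hXode t ht)
  timeDeriv_u x hx t ht := by
    refine (hpde x hx t ht).trans ?_
    rw [← iterate_spaceDeriv_apply, hp₁, sumElim_dotProduct_sumElim]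
    simp only [iterate_succ_apply, iterate_zero_apply, spaceDeriv]
    ring
  left_eq t ht := by simp [hleft t ht, hϑ0, hθ0]
  right_eq t ht := by simp [hright t ht, hϑ1, hθ1]

theorem thetaESq_eq_sobolevSq_add (n m : ℕ) (u : ℝ → ℝ → ℝ) (X : ℝ → Fin n → ℝ)
    (Z : ℝ → Fin m → ℝ) (t : ℝ) :
    ThetaESq n m u X Z t = sobolevSq (2 * m) (fun x => u x t) +
      Sum.elim (Z t) (X t) ⬝ᵥ Sum.elim (Z t) (X t) := by
  simp [ThetaESq, sobolevSq, dotProduct, sq, add_assoc]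

end Stacking

theorem stmt11_general {ι : Type*} [Fintype ι] {N : ℕ} (hN : 2 ≤ N) {q : ℝ} (hq : 0 < q)
    {B : Matrix ι ι ℝ} {b : ι → ℝ} {k : ℝ → ι → ℝ} (hk : ContDiff ℝ ∞ k)
    (hkode : ∀ x, q • deriv (deriv k) x = k x ᵥ* B) {Abar P Q : Matrix ι ι ℝ}
    (hAbar : Abar = B + Matrix.vecMulVec b (deriv k 0)) (hP : P.PosDef) (hQ : Q.PosDef)
    (hLyap : P * Abar + Abarᵀ * P = -Q) :
    ∃ Υ l : ℝ, 0 < Υ ∧ 0 < l ∧ ∀ (u : ℝ → ℝ → ℝ) (V : ℝ → ι → ℝ), IsErrorSolution q B b k u V →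
      ∀ t, 0 ≤ t → √(sobolevSq N (fun x => u x t) + V t ⬝ᵥ V t) ≤
        Υ * √(sobolevSq N (fun x => u x 0) + V 0 ⬝ᵥ V 0) * Real.exp (-l * t) := by
  subst hAbar
  obtain ⟨κ, hκ, l, hl, hdecay⟩ := exists_exp_decay_of_isErrorSolution hN hq hk hkode hP hQ hLyap
  exact ⟨√κ, l / 2, Real.sqrt_pos.2 hκ, half_pos hl,
    fun u V h t ht => sqrt_le_mul_sqrt_mul_exp hκ.le (hdecay u V h t ht)⟩

/-- exponential convergence of the observer error system. -/
theorem stmt11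
    (n m : ℕ) (hn : 1 ≤ n) (hm : 1 ≤ m)
    (q : ℝ) (hq : 0 < q)
    (A : Matrix (Fin n) (Fin n) ℝ) (Az : Matrix (Fin m) (Fin m) ℝ)
    (CX : Fin n → ℝ) (Cz : Fin m → ℝ)
    (P₀ : Fin n → ℝ) (P₂ : Fin m → ℝ)
    (ϑ : ℝ → Fin m → ℝ) (hϑsm : ContDiff ℝ (⊤ : ℕ∞) ϑ)
    (hϑode : ∀ x : ℝ, q • deriv (deriv ϑ) x = ϑ x ᵥ* Az)
    (hϑ0 : ϑ 0 = 0) (hϑ1 : ϑ 1 = -Cz)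
    (θ : ℝ → Fin n → ℝ) (hθsm : ContDiff ℝ (⊤ : ℕ∞) θ)
    (hθode : ∀ x : ℝ, q • deriv (deriv θ) x = θ x ᵥ* A)
    (hθ0 : θ 0 = -CX) (hθ1 : θ 1 = 0)
    (p₁ : ℝ → ℝ) (hp₁ : ∀ x : ℝ, p₁ x = -(ϑ x ⬝ᵥ P₂) - θ x ⬝ᵥ P₀)
    -- the matrix Ā and its Lyapunov certificate
    (Abar : Matrix (Fin m ⊕ Fin n) (Fin m ⊕ Fin n) ℝ)
    (hAbar : Abar = Matrix.fromBlocks Az 0 0 A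
      + Matrix.vecMulVec (Sum.elim P₂ P₀) (Sum.elim (deriv ϑ 0) (deriv θ 0)))
    (Pbar Qbar : Matrix (Fin m ⊕ Fin n) (Fin m ⊕ Fin n) ℝ)
    (hPbar : Pbar.PosDef) (hQbar : Qbar.PosDef)
    (hLyap : Pbar * Abar + Abarᵀ * Pbar = -Qbar) :
    ∃ Υe lame : ℝ, 0 < Υe ∧ 0 < lame ∧
      ∀ (tu : ℝ → ℝ → ℝ) (tX : ℝ → Fin n → ℝ) (tZ : ℝ → Fin m → ℝ),
        ContDiff ℝ (⊤ : ℕ∞) (Function.uncurry tu) →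
        ContDiff ℝ (⊤ : ℕ∞) tX → ContDiff ℝ (⊤ : ℕ∞) tZ →
        (∀ t : ℝ, 0 ≤ t →
          deriv tX t = A.mulVec (tX t) - (deriv (fun s => tu s t) 0) • P₀) →
        (∀ x ∈ Icc (0:ℝ) 1, ∀ t : ℝ, 0 ≤ t →
          deriv (fun s => tu x s) t =
            q * iteratedDeriv 2 (fun s => tu s t) x - p₁ x * deriv (fun s => tu s t) 0) →
        (∀ t : ℝ, 0 ≤ t → tu 0 t = CX ⬝ᵥ tX t) →
        (∀ t : ℝ, 0 ≤ t → tu 1 t = Cz ⬝ᵥ tZ t) →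
        (∀ t : ℝ, 0 ≤ t →
          deriv tZ t = Az.mulVec (tZ t) - (deriv (fun s => tu s t) 0) • P₂) →
        ∀ t : ℝ, 0 ≤ t →
          Real.sqrt (ThetaESq n m tu tX tZ t)
            ≤ Υe * Real.sqrt (ThetaESq n m tu tX tZ 0 + (deriv (fun s => tu s 0) 0) ^ 2)
              * Real.exp (-lame * t) := by
  have hAbar' : Abar = Matrix.fromBlocks Az 0 0 A + Matrix.vecMulVec (Sum.elim P₂ P₀)
      (deriv (fun x => Sum.elim (ϑ x) (θ x)) 0) := by
    rw [hAbar, deriv_sumElim (hϑsm.differentiable (by simp)) (hθsm.differentiable (by simp))]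
  obtain ⟨Υ, l, hΥ, hl, hdecay⟩ := stmt11_general (N := 2 * m) (by lia) hq
    (contDiff_sumElim hϑsm hθsm) (smul_deriv_deriv_sumElim hϑsm hθsm hϑode hθode) hAbar'
    hPbar hQbar hLyap
  refine ⟨Υ, l, hΥ, hl, fun tu tX tZ hu hX hZ hXode hpde hleft hright hZode t ht => ?_⟩
  simp only [thetaESq_eq_sobolevSq_add]
  refine (hdecay tu _ (isErrorSolution_sumElim hϑ0 hϑ1 hθ0 hθ1 hp₁ hu hX hZ hXode hpde hleft
    hright hZode) t ht).trans ?_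
  gcongr Υ * √?_ * _
  exact le_add_of_nonneg_right (sq_nonneg _)
end
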